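/- arXiv:2510.12804 — 2 statements merged into one kernel-verified Lean document; each statement's English description precedes it below -/
import Mathlib

section
/- Let p > q and θ ∈ (0, π/2). If h is a positive convex solution of det(∇²h + hσ) = f·h^{p-1}(h² + |∇h|²)^{(n+1-q)/2} in C_θ with ∇_μ h = cot θ · h on ∂C_θ, where f > 0 is smooth on C_θ, then the double normal second derivative on the boundary is bounded: sup_{∂C_θ} |∇²h(μ, μ)| ≤ C, where C depends only on n, p, q, min_{C_θ} f, min_{C_θ} h, ‖f‖_{C²(C_θ)} and ‖h‖_{C⁰(C_θ)}. -/
/- Formalization of statements from "The L_p dual Minkowski problem for capillary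
hypersurfaces".

We work in the ambient space `ℝ^{n+1}`.  The spherical cap `C_θ` is the part of the unit
sphere centred at `cos θ • e` (where `e = -E_{n+1}`) lying in the closed upper half-space.
Functions on `C_θ` are represented by ambient functions `h : Euc n → ℝ`; the intrinsic
(round-metric) gradient `∇h` and Hessian `∇²h` of the restriction of `h` to `C_θ` are
expressed through ambient derivatives (for tangential arguments these expressions depend
only on the restriction of `h` to the cap).  The quantity `det(∇²h + hσ)` is encoded as the
determinant of the endomorphism of `ℝ^{n+1}` acting as `∇²h + hσ` on the tangent space of
the cap and as the identity on the normal line. -/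

open Real Set
open scoped RealInnerProductSpace

noncomputable section

/-- Ambient Euclidean space `ℝ^{n+1}`. -/
abbrev Euc (n : ℕ) : Type := EuclideanSpace ℝ (Fin (n + 1))

/-- The unit vector `e = -E_{n+1}`. -/
def eVec (n : ℕ) : Euc n := -(EuclideanSpace.single (Fin.last n) (1 : ℝ))

/-- `ν(ξ) = ξ - cos θ • e`, the unit normal (at `ξ`) of the sphere containing the cap `C_θ`. -/
def sphNormal (n : ℕ) (θ : ℝ) (ξ : Euc n) : Euc n := ξ - Real.cos θ • eVec n

/-- The spherical cap `C_θ = {ξ ∈ closure ℝ^{n+1}_+ : |ξ - cos θ • e| = 1}`. -/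
def cap (n : ℕ) (θ : ℝ) : Set (Euc n) :=
  {ξ | 0 ≤ ξ (Fin.last n) ∧ ‖sphNormal n θ ξ‖ = 1}

/-- The boundary `∂C_θ`. -/
def capBdry (n : ℕ) (θ : ℝ) : Set (Euc n) :=
  {ξ | ξ (Fin.last n) = 0 ∧ ‖sphNormal n θ ξ‖ = 1}

/-- The outward unit conormal `μ` of `∂C_θ` in `C_θ` (at boundary points). -/
def conormal (n : ℕ) (θ : ℝ) (ξ : Euc n) : Euc n :=
  Real.cot θ • ξ + Real.sin θ • eVec n

/-- Orthogonal projection of `ℝ^{n+1}` onto the tangent space of the cap at `ξ`. -/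
def tproj (n : ℕ) (θ : ℝ) (ξ : Euc n) : Euc n →L[ℝ] Euc n :=
  ContinuousLinearMap.id ℝ (Euc n) - (innerSL ℝ (sphNormal n θ ξ)).smulRight (sphNormal n θ ξ)

/-- `X` is tangent to the cap at `ξ`. -/
def IsTangent (n : ℕ) (θ : ℝ) (ξ X : Euc n) : Prop :=
  ⟪X, sphNormal n θ ξ⟫ = 0

/-- Intrinsic (round-metric) gradient `∇h` of `h` on the cap. -/
def sgrad (n : ℕ) (θ : ℝ) (h : Euc n → ℝ) (ξ : Euc n) : Euc n :=
  tproj n θ ξ (gradient h ξ)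

/-- Intrinsic (round-metric) Hessian `∇²h(X,Y)` of `h` on the cap (tangential arguments). -/
def shess (n : ℕ) (θ : ℝ) (h : Euc n → ℝ) (ξ X Y : Euc n) : ℝ :=
  ⟪(fderiv ℝ (gradient h) ξ) X, Y⟫ - ⟪gradient h ξ, sphNormal n θ ξ⟫ * ⟪X, Y⟫

/-- Endomorphism representing the intrinsic Hessian `∇²h` on tangent vectors
(and vanishing on the normal line). -/
def thessOp (n : ℕ) (θ : ℝ) (h : Euc n → ℝ) (ξ : Euc n) : Euc n →L[ℝ] Euc n :=
  ((tproj n θ ξ).comp ((fderiv ℝ (gradient h) ξ).comp (tproj n θ ξ)))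
    - ⟪gradient h ξ, sphNormal n θ ξ⟫ • tproj n θ ξ

/-- Rank-one projection onto the normal direction at `ξ`. -/
def normalPart (n : ℕ) (θ : ℝ) (ξ : Euc n) : Euc n →L[ℝ] Euc n :=
  (innerSL ℝ (sphNormal n θ ξ)).smulRight (sphNormal n θ ξ)

/-- Endomorphism acting as `∇²h + hσ` on the tangent space and as the identity on the
normal line. -/
def hessOp (n : ℕ) (θ : ℝ) (h : Euc n → ℝ) (ξ : Euc n) : Euc n →L[ℝ] Euc n :=
  thessOp n θ h ξ + h ξ • tproj n θ ξ + normalPart n θ ξ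

/-- `det(∇²h + hσ)` at `ξ`. -/
def sdet (n : ℕ) (θ : ℝ) (h : Euc n → ℝ) (ξ : Euc n) : ℝ :=
  LinearMap.det (hessOp n θ h ξ).toLinearMap

/-- `h > 0` on the cap. -/
def PosOnCap (n : ℕ) (θ : ℝ) (h : Euc n → ℝ) : Prop := ∀ ξ ∈ cap n θ, 0 < h ξ

/-- Convexity of a solution: `∇²h + hσ > 0` on the cap. -/
def IsConvexSol (n : ℕ) (θ : ℝ) (h : Euc n → ℝ) : Prop :=
  ∀ ξ ∈ cap n θ, ∀ X : Euc n, IsTangent n θ ξ X → X ≠ 0 →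
    0 < shess n θ h ξ X X + h ξ * ⟪X, X⟫

/-- The right-hand side `f·h^{p-1}·(h² + |∇h|²)^{(n+1-q)/2}`. -/
def eqRHS (n : ℕ) (θ p q : ℝ) (f h : Euc n → ℝ) (ξ : Euc n) : ℝ :=
  f ξ * h ξ ^ (p - 1) * (h ξ ^ 2 + ‖sgrad n θ h ξ‖ ^ 2) ^ (((n : ℝ) + 1 - q) / 2)

/-- `h` solves `det(∇²h + hσ) = f·h^{p-1}(h² + |∇h|²)^{(n+1-q)/2}` in `C_θ`. -/
def SolvesEq (n : ℕ) (θ p q : ℝ) (f h : Euc n → ℝ) : Prop :=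
  ∀ ξ ∈ cap n θ, sdet n θ h ξ = eqRHS n θ p q f h ξ

/-- Robin boundary condition `∇_μ h = cot θ · h` on `∂C_θ`. -/
def RobinBC (n : ℕ) (θ : ℝ) (h : Euc n → ℝ) : Prop :=
  ∀ ξ ∈ capBdry n θ, ⟪sgrad n θ h ξ, conormal n θ ξ⟫ = Real.cot θ * h ξ

/-- `l(ξ) = sin²θ + cos θ·⟨ξ, e⟩`. -/
def lFun (n : ℕ) (θ : ℝ) (ξ : Euc n) : ℝ :=
  Real.sin θ ^ 2 + Real.cos θ * ⟪ξ, eVec n⟫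

/-- `‖f‖_{C⁰(C_θ)} ≤ K`. -/
def CZeroNormLe (n : ℕ) (θ : ℝ) (f : Euc n → ℝ) (K : ℝ) : Prop :=
  ∀ ξ ∈ cap n θ, |f ξ| ≤ K

/-- `‖f‖_{C¹(C_θ)} ≤ K`. -/
def COneNormLe (n : ℕ) (θ : ℝ) (f : Euc n → ℝ) (K : ℝ) : Prop :=
  CZeroNormLe n θ f K ∧ ∀ ξ ∈ cap n θ, ‖sgrad n θ f ξ‖ ≤ K

/-- `‖f‖_{C²(C_θ)} ≤ K`. -/
def CTwoNormLe (n : ℕ) (θ : ℝ) (f : Euc n → ℝ) (K : ℝ) : Prop :=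
  COneNormLe n θ f K ∧
    ∀ ξ ∈ cap n θ, ∀ X Y : Euc n, IsTangent n θ ξ X → IsTangent n θ ξ Y →
      |shess n θ f ξ X Y| ≤ K * ‖X‖ * ‖Y‖

/-- The linearized operator `L_h(γ)` of the equation `𝒢(∇²h,h) = 𝒥₁(∇h,h)` at `h`:
the derivative at `ε = 0` of `𝒢 - 𝒥₁` along the variation `h_ε = h·e^{εγ}`
(cf. equation (5.4) of the paper, which is exactly this derivative). -/
def linOp (n : ℕ) (θ p q : ℝ) (f h γ : Euc n → ℝ) (ξ : Euc n) : ℝ :=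
  deriv (fun ε : ℝ =>
    sdet n θ (fun x => h x * Real.exp (ε * γ x)) ξ
      - eqRHS n θ p q f (fun x => h x * Real.exp (ε * γ x)) ξ) 0

/-- Endomorphism acting as `l·∇²u + cos θ·(∇u ⊗ e^T + e^T ⊗ ∇u) + uσ` on the tangent space
and as the identity on the normal line. -/
def capillaryOp (n : ℕ) (θ : ℝ) (u : Euc n → ℝ) (ξ : Euc n) : Euc n →L[ℝ] Euc n :=
  lFun n θ ξ • thessOp n θ u ξ
    + Real.cos θ • ((innerSL ℝ (sgrad n θ u ξ)).smulRight (tproj n θ ξ (eVec n))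
        + (innerSL ℝ (tproj n θ ξ (eVec n))).smulRight (sgrad n θ u ξ))
    + u ξ • tproj n θ ξ + normalPart n θ ξ

/-- Endomorphism acting as `∇²v + ∇v ⊗ ∇v + σ` on the tangent space and as the identity on
the normal line. -/
def logOp (n : ℕ) (θ : ℝ) (v : Euc n → ℝ) (ξ : Euc n) : Euc n →L[ℝ] Euc n :=
  thessOp n θ v ξ + (innerSL ℝ (sgrad n θ v ξ)).smulRight (sgrad n θ v ξ)
    + tproj n θ ξ + normalPart n θ ξ

/-- Geodesic distance on `C_θ` from `ξ` to the top point `N = (0,…,0,1-cos θ)`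
(for `θ ∈ (0,π/2)` the cap is geodesically convex, so this is `arccos ⟨ν(ξ), ν(N)⟩`). -/
def distToTop (n : ℕ) (θ : ℝ) (ξ : Euc n) : ℝ :=
  Real.arccos (ξ (Fin.last n) + Real.cos θ)

/-- The function `d := d_N²/(2θ)`. -/
def dCap (n : ℕ) (θ : ℝ) (ξ : Euc n) : ℝ := distToTop n θ ξ ^ 2 / (2 * θ)

/-!
Extend `h` to a function `H`, homogeneous of degree one, on the cone over the cap `C_θ`, translated
so that it lies on the unit sphere. Then `∇²h + hσ` is the restriction of the Euclidean Hessian of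
`H` to tangent spaces, `h² + |∇h|² = |∇H|²`, and, with `E = -e`, the Robin condition becomes
`⟪E, ∇H⟫ = 0` on the boundary of the cap. Convexity bounds `|∇H|` by `max h / sin θ`.

Let `s = ⟪E, x⟫ - cos θ`. For either sign the barrier `a (s - N s²) ± ⟪E, ∇H⟫` vanishes on the
boundary, and it is nonnegative on the inner edge `s = δ` of a thin strip once `a δ` is large.
At an interior minimum in the strip the differentiated equation bounds
`tr S + (4N / cos θ) ⟪S τ, τ⟫`, where `S` inverts the matrix of principal radii and `τ` is the
tangential part of `E`; the bound depends neither on `N` nor on `a`. Since this quantity to the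
power `n + 1` dominates `det S * (1 + (4N / cos θ) |τ|²)` and `det S` is bounded below by the
equation, this is impossible for large `N`. So the barrier is nonnegative in the strip, and its
inward derivative at the boundary bounds `⟪∇²H E, E⟫`, a multiple of `∇²h(μ, μ) + h`, from both
sides.
-/

section LinearAlgebra

open InnerProductSpace

variable {V : Type*} [NormedAddCommGroup V] [InnerProductSpace ℝ V] [FiniteDimensional ℝ V]

lemma differentiable_continuousLinearMap_det :
    Differentiable ℝ (fun T : V →L[ℝ] V => T.det) := by
  have hdet (T : V →L[ℝ] V) : T.det =
      ((stdOrthonormalBasis ℝ V).toBasis.toMatrix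
        fun j => T (stdOrthonormalBasis ℝ V j)).det := by
    rw [ContinuousLinearMap.det, ← LinearMap.det_toMatrix (stdOrthonormalBasis ℝ V).toBasis]
    congr 1
    ext i j
    simp [LinearMap.toMatrix_apply, Module.Basis.toMatrix_apply]
  have hentry (i j) : Differentiable ℝ fun T : V →L[ℝ] V =>
      (stdOrthonormalBasis ℝ V).toBasis.toMatrix
        (fun j => T (stdOrthonormalBasis ℝ V j)) i j := by
    simp only [Module.Basis.toMatrix_apply, OrthonormalBasis.coe_toBasis_repr_apply,
      OrthonormalBasis.repr_apply_apply]
    exact (innerSL ℝ _).differentiable.comp (by fun_prop)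
  simp only [hdet, Matrix.det_apply]
  fun_prop

lemma fderiv_continuousLinearMap_det_one (B : V →L[ℝ] V) :
    fderiv ℝ (fun T : V →L[ℝ] V => T.det) 1 B = LinearMap.trace ℝ V B := by
  let b := (stdOrthonormalBasis ℝ V).toBasis
  have hline : HasDerivAt (fun t : ℝ => (1 + t • B).det)
      (fderiv ℝ (fun T : V →L[ℝ] V => T.det) 1 B) 0 := by
    have hcurve : HasDerivAt (fun t : ℝ => (1 : V →L[ℝ] V) + t • B) B 0 := by
      simpa using ((hasDerivAt_id (0 : ℝ)).smul_const B).const_add 1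
    have hfd := (differentiable_continuousLinearMap_det (V := V) 1).hasFDerivAt
    rw [show (1 : V →L[ℝ] V) = 1 + (0 : ℝ) • B by simp] at hfd
    simpa using! hfd.comp_hasDerivAt 0 hcurve
  refine hline.unique ?_
  have hexpand : (fun t : ℝ => (1 + t • B).det) = fun t : ℝ =>
      1 + (LinearMap.toMatrix b b B).trace * t + (Matrix.det (1 + (Polynomial.X : Polynomial ℝ) •
        (LinearMap.toMatrix b b B).map Polynomial.C)).divX.divX.eval t * t ^ 2 := by
    funext t
    rw [← Matrix.det_one_add_smul, ContinuousLinearMap.det, ← LinearMap.det_toMatrix b]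
    simp [LinearMap.toMatrix_one]
  rw [hexpand, LinearMap.trace_eq_matrix_trace ℝ b]
  have hlin := ((hasDerivAt_id (0 : ℝ)).const_mul (LinearMap.toMatrix b b B).trace).const_add 1
  have hrem := ((Polynomial.hasDerivAt ((Matrix.det (1 + (Polynomial.X : Polynomial ℝ) •
      (LinearMap.toMatrix b b B).map Polynomial.C)).divX.divX) (0 : ℝ)).mul
    ((hasDerivAt_id (0 : ℝ)).pow 2))
  simpa using! hlin.add hrem

lemma hasDerivAt_continuousLinearMap_det {M : ℝ → V →L[ℝ] V} {M' S : V →L[ℝ] V} {t₀ : ℝ}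
    (hM : HasDerivAt M M' t₀) (hS : S ∘L M t₀ = 1) :
    HasDerivAt (fun t => (M t).det) ((M t₀).det * LinearMap.trace ℝ V (S ∘L M')) t₀ := by
  have hfactor : (fun t => (M t).det) = fun t => (M t₀).det * (S ∘L M t).det := by
    funext t
    have hdet : S.det * (M t₀).det = 1 := by
      simpa [ContinuousLinearMap.det] using congrArg ContinuousLinearMap.det hS
    have hcomp : (S ∘L M t).det = S.det * (M t).det := by
      simp [ContinuousLinearMap.det]
    rw [hcomp, ← mul_assoc, mul_comm (M t₀).det, hdet, one_mul]
  have hSM : HasDerivAt (fun t => S ∘L M t) (S ∘L M') t₀ := by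
    simpa using (hasDerivAt_const t₀ S).clm_comp hM
  have hfd := (differentiable_continuousLinearMap_det (V := V) 1).hasFDerivAt
  rw [← hS] at hfd
  have hd := hfd.comp_hasDerivAt t₀ hSM
  rw [hS, fderiv_continuousLinearMap_det_one] at hd
  rw [hfactor]
  exact hd.const_mul _

lemma trace_comp_nonneg {S B : V →L[ℝ] V} (hS : S.IsPositive) (hB : ∀ w, 0 ≤ ⟪B w, w⟫) :
    0 ≤ LinearMap.trace ℝ V (S ∘L B) := by
  obtain ⟨k, u, rfl⟩ := ContinuousLinearMap.isPositive_iff_eq_sum_rankOne.1 hS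
  rw [ContinuousLinearMap.toLinearMap_comp, LinearMap.trace_comp_comm',
    ← ContinuousLinearMap.toLinearMap_comp]
  have hcomp : B ∘L ∑ i, rankOne ℝ (u i) (u i) = ∑ i, rankOne ℝ (B (u i)) (u i) := by
    ext w
    simp
  rw [hcomp, ContinuousLinearMap.toLinearMap_sum, map_sum]
  refine Finset.sum_nonneg fun i _ => ?_
  rw [trace_rankOne, real_inner_comm]
  exact hB (u i)

lemma exists_isPositive_inverse {A : V →L[ℝ] V} (hA : A.IsSymmetric)
    (hpos : ∀ w, w ≠ 0 → 0 < ⟪A w, w⟫) :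
    ∃ S : V →L[ℝ] V, S.IsPositive ∧ S ∘L A = 1 := by
  have hinj : Function.Injective (A : V →ₗ[ℝ] V) := by
    refine (injective_iff_map_eq_zero _).2 fun w hw => ?_
    by_contra hne
    have hw' : A w = 0 := hw
    simpa [hw'] using hpos w hne
  let e := (LinearEquiv.ofInjectiveEndo _ hinj).toContinuousLinearEquiv
  have hright (w) : A (e.symm w) = w := e.apply_symm_apply w
  refine ⟨e.symm, (ContinuousLinearMap.isPositive_iff _).2 ⟨fun v w => ?_, fun w => ?_⟩, ?_⟩
  · have h := hA (e.symm v) (e.symm w)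
    simp only [ContinuousLinearMap.coe_coe, hright] at h
    exact h.symm
  · rcases eq_or_ne w 0 with rfl | hw
    · simp
    · have h := hpos (e.symm w) (by simpa using hw)
      rw [hright, real_inner_comm] at h
      exact h.le
  · ext w
    exact e.symm_apply_apply w

lemma one_add_sum_le_prod_one_add {ι : Type*} (s : Finset ι) {g : ι → ℝ} (hg : ∀ i, 0 ≤ g i) :
    1 + ∑ i ∈ s, g i ≤ ∏ i ∈ s, (1 + g i) := by
  classical
  induction s using Finset.induction_on with
  | empty => simp
  | insert i s hi ih =>
    rw [Finset.sum_insert hi, Finset.prod_insert hi]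
    have hsum : 0 ≤ ∑ j ∈ s, g j := Finset.sum_nonneg fun j _ => hg j
    nlinarith [hg i, mul_nonneg (hg i) hsum, mul_le_mul_of_nonneg_left ih (hg i)]

lemma det_nonneg_of_isPositive {S : V →L[ℝ] V} (hS : S.IsPositive) : 0 ≤ S.det := by
  have hdet : S.det = ∏ i, hS.isSymmetric.eigenvalues rfl i :=
    hS.isSymmetric.det_eq_prod_eigenvalues rfl
  rw [hdet]
  exact Finset.prod_nonneg fun i _ => hS.toLinearMap.nonneg_eigenvalues rfl i

lemma det_mul_le_trace_add_pow {S : V →L[ℝ] V} (hS : S.IsPositive) {N : ℝ} (hN : 0 ≤ N) (v : V) :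
    S.det * (1 + N * ‖v‖ ^ 2) ≤
      (LinearMap.trace ℝ V S + N * ⟪S v, v⟫) ^ Module.finrank ℝ V := by
  have hsymm := hS.isSymmetric
  set b := hsymm.eigenvectorBasis rfl
  set lam := hsymm.eigenvalues rfl
  have hlam (i) : 0 ≤ lam i := hS.toLinearMap.nonneg_eigenvalues rfl i
  have htrace : LinearMap.trace ℝ V S = ∑ i, lam i := hsymm.trace_eq_sum_eigenvalues rfl
  have hdet : S.det = ∏ i, lam i := hsymm.det_eq_prod_eigenvalues rfl
  have hnorm : ‖v‖ ^ 2 = ∑ i, ⟪b i, v⟫ ^ 2 := by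
    rw [← b.sum_sq_norm_inner_right v]
    simp
  have hquad : ⟪S v, v⟫ = ∑ i, lam i * ⟪b i, v⟫ ^ 2 := by
    rw [← b.sum_inner_mul_inner]
    refine Finset.sum_congr rfl fun i _ => ?_
    have hb : S (b i) = lam i • b i := hsymm.apply_eigenvectorBasis rfl i
    rw [hS.inner_left_eq_inner_right, hb, real_inner_smul_right, real_inner_comm]
    ring
  calc S.det * (1 + N * ‖v‖ ^ 2)
      ≤ (∏ i, lam i) * ∏ i, (1 + N * ⟪b i, v⟫ ^ 2) := by
        rw [hdet, hnorm, Finset.mul_sum]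
        gcongr
        · exact Finset.prod_nonneg fun i _ => hlam i
        · exact one_add_sum_le_prod_one_add _ fun i => by positivity
    _ = ∏ i, (lam i + N * (lam i * ⟪b i, v⟫ ^ 2)) := by
        rw [← Finset.prod_mul_distrib]
        exact Finset.prod_congr rfl fun i _ => by ring
    _ ≤ ∏ _i : Fin (Module.finrank ℝ V), (LinearMap.trace ℝ V S + N * ⟪S v, v⟫) := by
        rw [htrace, hquad]
        have hterm (i) : 0 ≤ lam i * ⟪b i, v⟫ ^ 2 := mul_nonneg (hlam i) (sq_nonneg _)
        refine Finset.prod_le_prod (fun i _ => add_nonneg (hlam i) (mul_nonneg hN (hterm i))) ?_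
        intro i hi
        gcongr
        · exact Finset.single_le_sum (fun j _ => hlam j) hi
        · exact Finset.single_le_sum (fun j _ => hterm j) hi
    _ = _ := by simp

end LinearAlgebra

section Calculus

open Filter Topology InnerProductSpace

variable {V : Type*} [NormedAddCommGroup V] [InnerProductSpace ℝ V] [CompleteSpace V]

/-- The Hessian of `F` in a Euclidean space as an endomorphism, that is, the derivative of the
gradient field; it vanishes by convention where the gradient is not differentiable. -/
def hess (F : V → ℝ) (x : V) : V →L[ℝ] V := fderiv ℝ (gradient F) x

lemma contDiffAt_gradient {F : V → ℝ} {x : V} {k l : WithTop ℕ∞} (hF : ContDiffAt ℝ k F x)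
    (hl : l + 1 ≤ k) : ContDiffAt ℝ l (gradient F) x :=
  (toDual ℝ V).symm.toContinuousLinearEquiv.contDiff.contDiffAt.comp x (hF.fderiv_right hl)

lemma hasGradientAt_of_contDiffAt {F : V → ℝ} {x : V} {k : WithTop ℕ∞} (hF : ContDiffAt ℝ k F x)
    (hk : 1 ≤ k) : HasGradientAt F (gradient F x) x :=
  (hF.differentiableAt (by positivity)).hasGradientAt

lemma hasFDerivAt_gradient {F : V → ℝ} {x : V} (hF : ContDiffAt ℝ 2 F x) :
    HasFDerivAt (gradient F) (hess F x) x :=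
  ((contDiffAt_gradient hF (l := 1) (by norm_num)).differentiableAt (by norm_num)).hasFDerivAt

lemma hess_symm {F : V → ℝ} {x : V} (hF : ContDiffAt ℝ 2 F x) (v w : V) :
    ⟪hess F x v, w⟫ = ⟪hess F x w, v⟫ := by
  have hgrad (v w : V) : ⟪hess F x v, w⟫ = fderiv ℝ (fderiv ℝ F) x v w := by
    have hinner := (hasFDerivAt_gradient hF).inner ℝ (hasFDerivAt_const w x)
    have hdual := ((hF.fderiv_right (m := 1) (by norm_num)).differentiableAt
      (by norm_num)).hasFDerivAt.clm_apply (hasFDerivAt_const w x)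
    have hsame : (fun y => ⟪gradient F y, w⟫) = fun y => fderiv ℝ F y w :=
      funext fun y => toDual_symm_apply
    rw [hsame] at hinner
    simpa using! congrArg (· v) (hinner.unique hdual)
  rw [hgrad, hgrad, hF.isSymmSndFDerivAt (by simp) v w]

lemma hasDerivAt_comp_of_hasGradientAt {F : V → ℝ} {γ : ℝ → V} {G v : V} {t : ℝ}
    (hF : HasGradientAt F G (γ t)) (hγ : HasDerivAt γ v t) :
    HasDerivAt (fun t => F (γ t)) ⟪G, v⟫ t := by
  simpa using! hF.hasFDerivAt.comp_hasDerivAt t hγ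

lemma hasDerivAt_add_smul {V : Type*} [NormedAddCommGroup V] [NormedSpace ℝ V] (x w : V) (t : ℝ) :
    HasDerivAt (fun t : ℝ => x + t • w) w t := by
  simpa using ((hasDerivAt_id t).smul_const w).const_add x

lemma deriv2_nonneg_of_isLocalMin {φ φ' : ℝ → ℝ} {d a : ℝ} (hmin : IsLocalMin φ a)
    (hφ : ∀ᶠ t in 𝓝 a, HasDerivAt φ (φ' t) t) (hφ' : HasDerivAt φ' d a) : 0 ≤ d := by
  by_contra! hneg
  have hderiv : deriv φ =ᶠ[𝓝 a] φ' := hφ.mono fun t ht => ht.deriv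
  have hderiv2 : deriv (deriv φ) a = d := hderiv.deriv_eq.trans hφ'.deriv
  have hmax : IsLocalMax φ a := isLocalMax_of_deriv_deriv_neg (hderiv2 ▸ hneg) hmin.deriv_eq_zero
    hφ.self_of_nhds.continuousAt
  have hconst : φ =ᶠ[𝓝 a] fun _ => φ a := by
    filter_upwards [hmin, hmax] with t hle hge using le_antisymm hge hle
  have hzero : deriv (deriv φ) a = 0 := by
    simpa using hconst.deriv.deriv_eq
  linarith

lemma inner_fderiv_gradient_nonneg_of_isLocalMin {F : V → ℝ} {G : V → V} {B : V →L[ℝ] V} {x : V}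
    (hmin : IsLocalMin F x) (hG : ∀ᶠ y in 𝓝 x, HasGradientAt F (G y) y) (hB : HasFDerivAt G B x)
    (w : V) : 0 ≤ ⟪B w, w⟫ := by
  have hline : Tendsto (fun t : ℝ => x + t • w) (𝓝 0) (𝓝 x) := by
    simpa using (hasDerivAt_add_smul x w 0).continuousAt.tendsto
  have hB0 : HasFDerivAt G B (x + (0 : ℝ) • w) := by simpa using hB
  refine deriv2_nonneg_of_isLocalMin (φ := fun t : ℝ => F (x + t • w)) (a := 0)
    (φ' := fun t => ⟪G (x + t • w), w⟫) ?_ ?_ ?_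
  · have hmin0 : IsMinFilter F (𝓝 x) (x + (0 : ℝ) • w) := by simpa using! hmin
    exact hmin0.comp_tendsto (g := fun t : ℝ => x + t • w) hline
  · filter_upwards [hline.eventually hG] with t ht
    exact hasDerivAt_comp_of_hasGradientAt ht (hasDerivAt_add_smul x w t)
  · simpa using! (hB0.comp_hasDerivAt 0 (hasDerivAt_add_smul x w 0)).inner ℝ
      (hasDerivAt_const (0 : ℝ) w)

lemma deriv_nonneg_of_eventually_ge {φ : ℝ → ℝ} {d a : ℝ} (hφ : HasDerivAt φ d a)
    (hge : ∀ᶠ t in 𝓝[>] a, φ a ≤ φ t) : 0 ≤ d := by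
  have hslope : Tendsto (slope φ a) (𝓝[>] a) (𝓝 d) := (hasDerivAt_iff_tendsto_slope.1 hφ).mono_left
    (nhdsWithin_mono a fun t ht => ne_of_gt (mem_Ioi.1 ht))
  refine ge_of_tendsto hslope ?_
  filter_upwards [hge, self_mem_nhdsWithin] with t ht hat
  rw [slope_def_field]
  exact div_nonneg (sub_nonneg.2 ht) (sub_nonneg.2 (le_of_lt hat))

lemma add_inner_gradient_le {F : V → ℝ} {x z : V}
    (hF : ∀ t ∈ Icc (0 : ℝ) 1, ContDiffAt ℝ 2 F (x + t • (z - x)))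
    (hpos : ∀ t ∈ Icc (0 : ℝ) 1, 0 ≤ ⟪hess F (x + t • (z - x)) (z - x), z - x⟫) :
    F x + ⟪gradient F x, z - x⟫ ≤ F z := by
  set γ : ℝ → V := fun t => x + t • (z - x)
  have hd (t : ℝ) (ht : t ∈ Icc (0 : ℝ) 1) :
      HasDerivAt (fun t => F (γ t)) ⟪gradient F (γ t), z - x⟫ t :=
    hasDerivAt_comp_of_hasGradientAt (hasGradientAt_of_contDiffAt (hF t ht) (by norm_num))
      (hasDerivAt_add_smul x (z - x) t)
  have hdd (t : ℝ) (ht : t ∈ Icc (0 : ℝ) 1) :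
      HasDerivAt (fun t => ⟪gradient F (γ t), z - x⟫) ⟪hess F (γ t) (z - x), z - x⟫ t := by
    simpa using! ((hasFDerivAt_gradient (hF t ht)).comp_hasDerivAt t
      (hasDerivAt_add_smul x (z - x) t)).inner ℝ (hasDerivAt_const t (z - x))
  have hconv : ConvexOn ℝ (Icc 0 1) fun t => F (γ t) := by
    refine convexOn_of_hasDerivWithinAt2_nonneg (convex_Icc 0 1)
      (fun t ht => (hd t ht).continuousAt.continuousWithinAt)
      (fun t ht => (hd t (interior_subset ht)).hasDerivWithinAt)
      (fun t ht => (hdd t (interior_subset ht)).hasDerivWithinAt)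
      fun t ht => hpos t (interior_subset ht)
  have hslope := hconv.le_slope_of_hasDerivAt (left_mem_Icc.2 zero_le_one)
    (right_mem_Icc.2 zero_le_one) zero_lt_one (hd 0 (left_mem_Icc.2 zero_le_one))
  simp only [slope_def_field, γ, zero_smul, add_zero, one_smul, add_sub_cancel, sub_zero,
    div_one] at hslope
  linarith

end Calculus

section Normalization

open Filter Topology InnerProductSpace

variable {V : Type*} [NormedAddCommGroup V] [InnerProductSpace ℝ V]

lemma ne_zero_of_norm_eq_one {V : Type*} [NormedAddCommGroup V] {x : V} (hx : ‖x‖ = 1) : x ≠ 0 :=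
  norm_ne_zero_iff.1 (by simp [hx])

/-- Orthogonal projection onto the tangent space of the unit sphere at the unit vector `x`. -/
def tangentProj (x : V) : V →L[ℝ] V := ContinuousLinearMap.id ℝ V - rankOne ℝ x x

lemma tangentProj_apply (x w : V) : tangentProj x w = w - ⟪x, w⟫ • x := by
  simp [tangentProj]

lemma inner_tangentProj_right (x v w : V) : ⟪v, tangentProj x w⟫ = ⟪tangentProj x v, w⟫ := by
  simp only [tangentProj_apply, inner_sub_left, inner_sub_right, real_inner_smul_left,
    real_inner_smul_right, real_inner_comm x v]
  ring

lemma inner_tangentProj_self {x : V} (hx : ‖x‖ = 1) (w : V) : ⟪x, tangentProj x w⟫ = 0 := by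
  simp [tangentProj_apply, inner_sub_right, real_inner_smul_right, hx]

lemma tangentProj_eq_self {x w : V} (hw : ⟪x, w⟫ = 0) : tangentProj x w = w := by
  simp [tangentProj_apply, hw]

lemma norm_sq_tangentProj {x : V} (hx : ‖x‖ = 1) (w : V) :
    ‖tangentProj x w‖ ^ 2 = ‖w‖ ^ 2 - ⟪x, w⟫ ^ 2 := by
  rw [← real_inner_self_eq_norm_sq, inner_tangentProj_right,
    tangentProj_eq_self (inner_tangentProj_self hx w), real_inner_comm, inner_tangentProj_right,
    ← inner_tangentProj_right, tangentProj_apply, inner_sub_right, real_inner_smul_right,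
    real_inner_self_eq_norm_sq, real_inner_comm x w]
  ring

lemma hasFDerivAt_norm {x : V} (hx : x ≠ 0) :
    HasFDerivAt (fun y : V => ‖y‖) (innerSL ℝ (NormedSpace.normalize x)) x := by
  have hsq := (hasStrictFDerivAt_norm_sq x).hasFDerivAt.sqrt (by simpa using hx)
  simp only [Real.sqrt_sq (norm_nonneg _)] at hsq
  refine hsq.congr_fderiv ?_
  ext w
  have hx' : ‖x‖ ≠ 0 := norm_ne_zero_iff.2 hx
  simp only [one_div, mul_inv_rev, smul_apply, coe_innerSL_apply, nsmul_eq_mul, Nat.cast_ofNat,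
    smul_eq_mul, NormedSpace.normalize, map_smul]
  field_simp

lemma hasFDerivAt_normalize {x : V} (hx : x ≠ 0) :
    HasFDerivAt (NormedSpace.normalize (V := V))
      (‖x‖⁻¹ • tangentProj (NormedSpace.normalize x)) x := by
  have hx' : ‖x‖ ≠ 0 := norm_ne_zero_iff.2 hx
  have hinv := (hasDerivAt_inv hx').comp_hasFDerivAt x (hasFDerivAt_norm hx)
  refine (hinv.smul (hasFDerivAt_id x)).congr_fderiv ?_
  ext w
  simp only [Function.comp_apply, NormedSpace.normalize, map_smul, smul_smul, neg_mul, neg_smul,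
    id_eq, add_apply, smul_apply, ContinuousLinearMap.id_apply,
    ContinuousLinearMap.smulRight_apply, neg_apply, coe_innerSL_apply, smul_eq_mul,
    tangentProj_apply, real_inner_smul_left, smul_sub]
  field_simp
  module

lemma continuousAt_normalize {x : V} (hx : x ≠ 0) :
    ContinuousAt (NormedSpace.normalize (V := V)) x :=
  (hasFDerivAt_normalize hx).continuousAt

lemma isLocalMin_of_isLocalMinOn_sphere {F : V → ℝ} {x : V}
    (hF : ∀ y, y ≠ 0 → F (NormedSpace.normalize y) = F y) (hx : ‖x‖ = 1)
    (hmin : IsLocalMinOn F (Metric.sphere 0 1) x) : IsLocalMin F x := by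
  have hx0 := ne_zero_of_norm_eq_one hx
  have hxn : NormedSpace.normalize x = x := NormedSpace.normalize_eq_self_of_norm_eq_one hx
  have hne : ∀ᶠ y in 𝓝 x, y ≠ 0 := isOpen_ne.eventually_mem hx0
  have htend : Tendsto (NormedSpace.normalize (V := V)) (𝓝 x) (𝓝[Metric.sphere 0 1] x) := by
    refine tendsto_nhdsWithin_iff.2 ⟨by simpa [ContinuousAt, hxn] using continuousAt_normalize hx0,
      ?_⟩
    filter_upwards [hne] with y hy
    simpa using NormedSpace.norm_normalize_eq_one_iff.2 hy
  filter_upwards [htend.eventually hmin, hne] with y hle hy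
  rwa [hF y hy] at hle

lemma hasGradientAt_inner_normalize [CompleteSpace V] (v : V) {x : V} (hx : x ≠ 0) :
    HasGradientAt (fun y => ⟪v, NormedSpace.normalize y⟫)
      (‖x‖⁻¹ • tangentProj (NormedSpace.normalize x) v) x := by
  rw [hasGradientAt_iff_hasFDerivAt]
  refine ((hasFDerivAt_const v x).inner ℝ (hasFDerivAt_normalize hx)).congr_fderiv ?_
  ext w
  simp [real_inner_smul_right, inner_tangentProj_right]

lemma hasFDerivAt_gradient_inner_normalize (v : V) {x : V} (hx : ‖x‖ = 1) :
    HasFDerivAt (fun y => ‖y‖⁻¹ • tangentProj (NormedSpace.normalize y) v)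
      (-(rankOne ℝ (tangentProj x v) x + rankOne ℝ x (tangentProj x v) +
        ⟪v, x⟫ • tangentProj x)) x := by
  have hx0 := ne_zero_of_norm_eq_one hx
  have hxn : NormedSpace.normalize x = x := NormedSpace.normalize_eq_self_of_norm_eq_one hx
  have hinv := (hasDerivAt_inv (norm_ne_zero_iff.2 hx0)).comp_hasFDerivAt x (hasFDerivAt_norm hx0)
  have hnorm := hasFDerivAt_normalize hx0
  have hproj := (((hnorm.inner ℝ (hasFDerivAt_const v x)).smul hnorm).const_sub v)
  simp only [tangentProj_apply] at hproj ⊢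
  refine (hinv.smul hproj).congr_fderiv ?_
  ext w
  simp only [Function.comp_apply, hx, inv_one, hxn, real_inner_comm, one_smul, neg_add_rev,
    smul_add, smul_neg, one_pow, neg_smul, Pi.smul_apply', add_apply, neg_apply,
    ContinuousLinearMap.smulRight_apply, ContinuousLinearMap.comp_apply,
    ContinuousLinearMap.prod_apply, tangentProj_apply, zero_apply, fderivInnerCLM_apply,
    inner_zero_right, inner_sub_left, real_inner_smul_right, zero_add, smul_apply,
    coe_innerSL_apply, map_sub, map_smul, sub_apply, neg_sub, rankOne_apply]
  module

end Normalization

section Homogeneous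

open Filter Topology

variable {V : Type*} [NormedAddCommGroup V] [InnerProductSpace ℝ V]

lemma hasDerivAt_smul_const {V : Type*} [NormedAddCommGroup V] [NormedSpace ℝ V] (x : V) (t : ℝ) :
    HasDerivAt (fun t : ℝ => t • x) x t := by
  simpa using (hasDerivAt_id t).smul_const x

/-- `H` is of class `C³` and positively homogeneous of degree one away from the origin, as is the
one-homogeneous extension of a `C³` function on the unit sphere. -/
structure IsHomogeneousC3 (H : V → ℝ) : Prop where
  contDiffAt : ∀ x, x ≠ 0 → ContDiffAt ℝ 3 H x
  map_smul : ∀ x, ∀ t : ℝ, 0 < t → H (t • x) = t * H x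

namespace IsHomogeneousC3

variable {H : V → ℝ} {x : V}

lemma contDiffAt_two (hH : IsHomogeneousC3 H) (hx : x ≠ 0) : ContDiffAt ℝ 2 H x :=
  (hH.contDiffAt x hx).of_le (by norm_num)

variable [CompleteSpace V]

lemma hasGradientAt (hH : IsHomogeneousC3 H) (hx : x ≠ 0) : HasGradientAt H (gradient H x) x :=
  hasGradientAt_of_contDiffAt (hH.contDiffAt x hx) (by norm_num)

lemma hasFDerivAt_gradient (hH : IsHomogeneousC3 H) (hx : x ≠ 0) :
    HasFDerivAt (gradient H) (hess H x) x :=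
  _root_.hasFDerivAt_gradient (hH.contDiffAt_two hx)

lemma hess_symm (hH : IsHomogeneousC3 H) (hx : x ≠ 0) (v w : V) :
    ⟪hess H x v, w⟫ = ⟪hess H x w, v⟫ :=
  _root_.hess_symm (hH.contDiffAt_two hx) v w

lemma hasFDerivAt_hess (hH : IsHomogeneousC3 H) (hx : x ≠ 0) :
    HasFDerivAt (hess H) (fderiv ℝ (hess H) x) x :=
  (((contDiffAt_gradient (hH.contDiffAt x hx) (l := 2) (by norm_num)).fderiv_right
    (m := 1) (by norm_num)).differentiableAt (by norm_num)).hasFDerivAt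

lemma fderiv_hess_symm (hH : IsHomogeneousC3 H) (hx : x ≠ 0) (v w : V) :
    fderiv ℝ (hess H) x v w = fderiv ℝ (hess H) x w v :=
  (contDiffAt_gradient (hH.contDiffAt x hx) (l := 2) (by norm_num)).isSymmSndFDerivAt
    (by simp) v w

lemma gradient_smul (hH : IsHomogeneousC3 H) (hx : x ≠ 0) {t : ℝ} (ht : 0 < t) :
    gradient H (t • x) = gradient H x := by
  have hcomp := (hH.hasGradientAt (smul_ne_zero ht.ne' hx)).hasFDerivAt.comp x
    ((hasFDerivAt_id x).const_smul t)
  have hscaled := (hH.hasGradientAt hx).hasFDerivAt.const_mul t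
  have hsame : (H ∘ fun y => t • y) = fun y => t * H y := funext fun y => hH.map_smul y t ht
  have heq := hcomp.unique (hsame ▸ hscaled)
  refine ext_inner_right ℝ fun w => mul_left_cancel₀ ht.ne' ?_
  simpa [real_inner_smul_right] using! congrArg (· w) heq

lemma inner_gradient_self (hH : IsHomogeneousC3 H) (hx : x ≠ 0) : ⟪gradient H x, x⟫ = H x := by
  have hgrad : HasGradientAt H (gradient H x) ((1 : ℝ) • x) := by
    simpa using hH.hasGradientAt hx
  have hlin : HasDerivAt (fun t : ℝ => t * H x) (H x) 1 := by
    simpa using (hasDerivAt_id (1 : ℝ)).mul_const (H x)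
  refine (hasDerivAt_comp_of_hasGradientAt hgrad (hasDerivAt_smul_const x 1)).unique
    (hlin.congr_of_eventuallyEq ?_)
  filter_upwards [lt_mem_nhds zero_lt_one] with t ht using hH.map_smul x t ht

lemma hess_self (hH : IsHomogeneousC3 H) (hx : x ≠ 0) : hess H x x = 0 := by
  have hgrad : HasFDerivAt (gradient H) (hess H x) ((1 : ℝ) • x) := by
    simpa using hH.hasFDerivAt_gradient hx
  refine (hgrad.comp_hasDerivAt 1 (hasDerivAt_smul_const x 1)).unique
    ((hasDerivAt_const (1 : ℝ) (gradient H x)).congr_of_eventuallyEq ?_)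
  filter_upwards [lt_mem_nhds zero_lt_one] with t ht using hH.gradient_smul hx ht

lemma hess_smul (hH : IsHomogeneousC3 H) (hx : x ≠ 0) {t : ℝ} (ht : 0 < t) :
    hess H (t • x) = t⁻¹ • hess H x := by
  have hcomp := (hH.hasFDerivAt_gradient (smul_ne_zero ht.ne' hx)).comp x
    ((hasFDerivAt_id x).const_smul t)
  have heq := hcomp.unique ((hH.hasFDerivAt_gradient hx).congr_of_eventuallyEq ?_)
  · ext1 w
    rw [smul_apply, eq_inv_smul_iff₀ ht.ne', ← heq]
    simp
  · filter_upwards [isOpen_ne.eventually_mem hx] with y hy using hH.gradient_smul hy ht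

lemma fderiv_hess_self (hH : IsHomogeneousC3 H) (hx : x ≠ 0) :
    fderiv ℝ (hess H) x x = -hess H x := by
  have hhess : HasFDerivAt (hess H) (fderiv ℝ (hess H) x) ((1 : ℝ) • x) := by
    simpa using hH.hasFDerivAt_hess hx
  have hinv : HasDerivAt (fun t : ℝ => t⁻¹ • hess H x) (-hess H x) 1 := by
    simpa using (hasDerivAt_inv (one_ne_zero (α := ℝ))).smul_const (hess H x)
  refine (hhess.comp_hasDerivAt 1 (hasDerivAt_smul_const x 1)).unique
    (hinv.congr_of_eventuallyEq ?_)
  filter_upwards [lt_mem_nhds zero_lt_one] with t ht using hH.hess_smul hx ht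

lemma gradient_normalize (hH : IsHomogeneousC3 H) (hx : x ≠ 0) :
    gradient H (NormedSpace.normalize x) = gradient H x :=
  hH.gradient_smul hx (inv_pos.2 (norm_pos_iff.2 hx))

lemma inner_hess_tangentProj (hH : IsHomogeneousC3 H) (hx : x ≠ 0) (v w : V) :
    ⟪hess H x (tangentProj x v), tangentProj x w⟫ = ⟪hess H x v, w⟫ := by
  have hleft : hess H x (tangentProj x v) = hess H x v := by
    simp [tangentProj_apply, hH.hess_self hx]
  rw [hleft, hH.hess_symm hx, hH.hess_symm hx v]
  simp [tangentProj_apply, hH.hess_self hx]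

end IsHomogeneousC3

end Homogeneous

section CapillarySupport

open Filter Topology InnerProductSpace

variable {V : Type*} [NormedAddCommGroup V] [InnerProductSpace ℝ V]

/-- The closed cap `{x : |x| = 1, ⟪E, x⟫ ≥ c}` of the unit sphere with pole `E`; this is the cap
`C_θ` translated to the origin when `c = cos θ`. -/
def unitCap (E : V) (c : ℝ) : Set V := {x | ‖x‖ = 1 ∧ c ≤ ⟪E, x⟫}

lemma inner_le_one {E x : V} (hE : ‖E‖ = 1) (hx : ‖x‖ = 1) : ⟪E, x⟫ ≤ 1 := by
  simpa [hE, hx] using real_inner_le_norm E x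

variable [FiniteDimensional ℝ V]

lemma isCompact_unitCap (E : V) (c : ℝ) : IsCompact (unitCap E c) := by
  have hclosed : IsClosed {x : V | c ≤ ⟪E, x⟫} :=
    isClosed_le continuous_const (continuous_const.inner continuous_id)
  have hset : unitCap E c = Metric.sphere 0 1 ∩ {x : V | c ≤ ⟪E, x⟫} := by
    ext x
    simp [unitCap]
  rw [hset]
  exact (isCompact_sphere 0 1).inter_right hclosed

/-- `H` is the one-homogeneous support function of a strictly convex capillary hypersurface: its
Hessian is positive on the tangent spaces of the cap and its gradient, which is the position vector
of the hypersurface, lies in the hyperplane orthogonal to `E` along the boundary of the cap. The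
latter is the Robin condition for the restriction of `H` to the cap. -/
structure IsCapillarySupport (E : V) (c : ℝ) (H : V → ℝ) : Prop extends IsHomogeneousC3 H where
  inner_hess_pos : ∀ x ∈ unitCap E c, ∀ w, ⟪x, w⟫ = 0 → w ≠ 0 → 0 < ⟪hess H x w, w⟫
  inner_gradient_eq_zero : ∀ x, ‖x‖ = 1 → ⟪E, x⟫ = c → ⟪E, gradient H x⟫ = 0

/-- The endomorphism whose restriction to the tangent space `x^⊥` of the unit sphere is the Hessian
of `H`, so that its eigenvalues there are the principal radii of curvature of the hypersurface with
support function `H`, and which fixes the unit vector `x`. -/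
def radiiOp (H : V → ℝ) (x : V) : V →L[ℝ] V := hess H x + rankOne ℝ x x

namespace IsCapillarySupport

variable {E : V} {c : ℝ} {H : V → ℝ}

lemma inner_hess_nonneg (hH : IsCapillarySupport E c H) {x : V} (hx : x ∈ unitCap E c) (w : V) :
    0 ≤ ⟪hess H x w, w⟫ := by
  rw [← hH.inner_hess_tangentProj (ne_zero_of_norm_eq_one hx.1)]
  rcases eq_or_ne (tangentProj x w) 0 with hw | hw
  · simp [hw]
  · exact (hH.inner_hess_pos x hx _ (inner_tangentProj_self hx.1 w) hw).le

lemma inner_hess_nonneg_of_cone (hH : IsCapillarySupport E c H) {y : V} (hy : y ≠ 0)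
    (hcone : c * ‖y‖ ≤ ⟪E, y⟫) (w : V) : 0 ≤ ⟪hess H y w, w⟫ := by
  have hnorm : 0 < ‖y‖ := norm_pos_iff.2 hy
  have hcap : NormedSpace.normalize y ∈ unitCap E c := by
    refine ⟨NormedSpace.norm_normalize_eq_one_iff.2 hy, ?_⟩
    rw [NormedSpace.normalize, real_inner_smul_right, ← div_eq_inv_mul, le_div_iff₀ hnorm]
    exact hcone
  rw [← NormedSpace.norm_smul_normalize y,
    hH.hess_smul (ne_zero_of_norm_eq_one hcap.1) hnorm, smul_apply,
    real_inner_smul_left]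
  exact mul_nonneg (inv_nonneg.2 hnorm.le) (hH.inner_hess_nonneg hcap w)

/-- The gradient at any point of the cap is a point of the convex body with support function `H`;
only directions `z` in the cap are admissible since `H` is convex only there. -/
lemma inner_gradient_le (hH : IsCapillarySupport E c H) (hc : 0 < c) {x z : V}
    (hx : x ∈ unitCap E c) (hz : z ∈ unitCap E c) : ⟪gradient H x, z⟫ ≤ H z := by
  have hcone (t : ℝ) (ht : t ∈ Icc (0 : ℝ) 1) : x + t • (z - x) ≠ 0 ∧
      c * ‖x + t • (z - x)‖ ≤ ⟪E, x + t • (z - x)⟫ := by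
    have hcomb : x + t • (z - x) = (1 - t) • x + t • z := by module
    have hinner : c ≤ ⟪E, (1 - t) • x + t • z⟫ := by
      rw [inner_add_right, real_inner_smul_right, real_inner_smul_right]
      nlinarith [hx.2, hz.2, ht.1, ht.2, mul_nonneg ht.1 (sub_nonneg.2 hz.2),
        mul_nonneg (sub_nonneg.2 ht.2) (sub_nonneg.2 hx.2)]
    have hnorm : ‖(1 - t) • x + t • z‖ ≤ 1 := by
      refine (norm_add_le _ _).trans_eq ?_
      rw [norm_smul, norm_smul, hx.1, hz.1, Real.norm_of_nonneg ht.1,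
        Real.norm_of_nonneg (sub_nonneg.2 ht.2)]
      ring
    rw [hcomb]
    refine ⟨fun h => ?_, by nlinarith⟩
    rw [h, inner_zero_right] at hinner
    linarith
  have hx0 := ne_zero_of_norm_eq_one hx.1
  have hgrad := add_inner_gradient_le (F := H) (x := x) (z := z)
    (fun t ht => hH.contDiffAt_two (hcone t ht).1)
    (fun t ht => hH.inner_hess_nonneg_of_cone (hcone t ht).1 (hcone t ht).2 _)
  rw [inner_sub_right, hH.inner_gradient_self hx0] at hgrad
  linarith

lemma norm_gradient_mul_le_of_boundary (hH : IsCapillarySupport E c H) (hE : ‖E‖ = 1) (hc : 0 < c)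
    {K : ℝ} (hK : ∀ z ∈ unitCap E c, |H z| ≤ K) {x : V} (hx : ‖x‖ = 1)
    (hxc : ⟪E, x⟫ = c) : ‖gradient H x‖ * √(1 - c ^ 2) ≤ K := by
  set G := gradient H x
  have hEG : ⟪E, G⟫ = 0 := hH.inner_gradient_eq_zero x hx hxc
  have hx_mem : x ∈ unitCap E c := ⟨hx, hxc.ge⟩
  rcases eq_or_ne G 0 with hG | hG
  · rw [hG, norm_zero, zero_mul]
    exact (abs_nonneg _).trans (hK x hx_mem)
  have hsq : √(1 - c ^ 2) ^ 2 = 1 - c ^ 2 := by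
    have hc1 : c ≤ 1 := hxc ▸ inner_le_one hE hx
    exact Real.sq_sqrt (by nlinarith)
  have hG1 : ‖NormedSpace.normalize G‖ = 1 := NormedSpace.norm_normalize_eq_one_iff.2 hG
  have hEn : ⟪E, NormedSpace.normalize G⟫ = 0 := by
    rw [NormedSpace.normalize, real_inner_smul_right, hEG, mul_zero]
  set z := √(1 - c ^ 2) • NormedSpace.normalize G + c • E
  have hz : z ∈ unitCap E c := by
    constructor
    · rw [← sq_eq_sq₀ (norm_nonneg _) zero_le_one, norm_add_sq_real, norm_smul, norm_smul, mul_pow,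
        mul_pow, hG1, hE, Real.norm_eq_abs, Real.norm_eq_abs, sq_abs, sq_abs, hsq,
        real_inner_smul_left, real_inner_smul_right, real_inner_comm, hEn]
      ring
    · rw [inner_add_right, real_inner_smul_right, real_inner_smul_right, hEn,
        real_inner_self_eq_norm_sq, hE]
      simp
  have hGn : ⟪G, NormedSpace.normalize G⟫ = ‖G‖ := by
    rw [NormedSpace.normalize, real_inner_smul_right, real_inner_self_eq_norm_sq]
    field_simp [norm_ne_zero_iff.2 hG]
  calc ‖G‖ * √(1 - c ^ 2) = ⟪G, z⟫ := by
        rw [inner_add_right, real_inner_smul_right, real_inner_smul_right, hGn,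
          real_inner_comm, hEG]
        ring
    _ ≤ H z := hH.inner_gradient_le hc hx_mem hz
    _ ≤ K := (le_abs_self _).trans (hK z hz)

/-- At an interior maximum of `|∇H|` on the cap the vector `∇H x` is annihilated by the Hessian,
hence is radial. -/
lemma norm_gradient_eq_of_interior_max (hH : IsCapillarySupport E c H) {x : V} (hx : ‖x‖ = 1)
    (hxc : c < ⟪E, x⟫) (hmax : ∀ y ∈ unitCap E c, ‖gradient H y‖ ≤ ‖gradient H x‖) :
    ‖gradient H x‖ = |H x| := by
  have hx0 := ne_zero_of_norm_eq_one hx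
  have hsphere : IsLocalMinOn (fun y => -‖gradient H y‖ ^ 2) (Metric.sphere 0 1) x := by
    have hopen : ∀ᶠ y in 𝓝 x, c < ⟪E, y⟫ :=
      (continuous_const.inner continuous_id).continuousAt.eventually_const_lt hxc
    filter_upwards [nhdsWithin_le_nhds hopen, self_mem_nhdsWithin] with y hyc hy
    have hle := hmax y ⟨by simpa using hy, hyc.le⟩
    simp only [neg_le_neg_iff]
    gcongr
  have hmin := isLocalMin_of_isLocalMinOn_sphere
    (fun y hy => by simp only [hH.gradient_normalize hy]) hx hsphere
  have hderiv := hmin.hasFDerivAt_eq_zero (hH.hasFDerivAt_gradient hx0).norm_sq.neg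
  have hhess : hess H x (gradient H x) = 0 := by
    refine ext_inner_left ℝ fun w => ?_
    have hw := congrArg (· w) hderiv
    simp only [neg_apply, smul_apply, ContinuousLinearMap.comp_apply, innerSL_apply_apply,
      zero_apply, nsmul_eq_mul, Nat.cast_ofNat] at hw
    rw [inner_zero_right, real_inner_comm, hH.hess_symm hx0, real_inner_comm]
    linarith
  have htangent : tangentProj x (gradient H x) = 0 := by
    by_contra hne
    have hpos := hH.inner_hess_pos x ⟨hx, hxc.le⟩ _ (inner_tangentProj_self hx _) hne
    rw [hH.inner_hess_tangentProj hx0, hhess, inner_zero_left] at hpos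
    exact hpos.false
  rw [tangentProj_apply, real_inner_comm, hH.inner_gradient_self hx0, sub_eq_zero] at htangent
  rw [htangent, norm_smul, hx, mul_one, Real.norm_eq_abs]

lemma norm_gradient_mul_le (hH : IsCapillarySupport E c H) (hE : ‖E‖ = 1) (hc : 0 < c)
    {K : ℝ} (hK : ∀ z ∈ unitCap E c, |H z| ≤ K) {x : V} (hx : x ∈ unitCap E c) :
    ‖gradient H x‖ * √(1 - c ^ 2) ≤ K := by
  have hcont : ContinuousOn (fun y => ‖gradient H y‖) (unitCap E c) := fun y hy =>
    (hH.hasFDerivAt_gradient (ne_zero_of_norm_eq_one hy.1)).continuousAt.norm.continuousWithinAt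
  obtain ⟨x₀, hx₀, hmax⟩ := (isCompact_unitCap E c).exists_isMaxOn ⟨x, hx⟩ hcont
  have hle : ‖gradient H x‖ ≤ ‖gradient H x₀‖ := hmax hx
  refine (mul_le_mul_of_nonneg_right hle (Real.sqrt_nonneg _)).trans ?_
  rcases hx₀.2.eq_or_lt with hbdry | hint
  · exact hH.norm_gradient_mul_le_of_boundary hE hc hK hx₀.1 hbdry.symm
  · rw [hH.norm_gradient_eq_of_interior_max hx₀.1 hint fun y hy => hmax hy]
    have hsqrt : √(1 - c ^ 2) ≤ 1 := Real.sqrt_le_one.2 (by nlinarith)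
    exact (mul_le_of_le_one_right (abs_nonneg _) hsqrt).trans (hK x₀ hx₀)

end IsCapillarySupport

end CapillarySupport

section LinearizedEquation

open Filter Topology InnerProductSpace

variable {V : Type*} [NormedAddCommGroup V] [InnerProductSpace ℝ V]

lemma hasDerivAt_normalize_add_smul {x w : V} (hx : ‖x‖ = 1) (hw : ⟪x, w⟫ = 0) :
    HasDerivAt (fun t : ℝ => NormedSpace.normalize (x + t • w)) w 0 := by
  have hproj : HasFDerivAt NormedSpace.normalize (tangentProj x) (x + (0 : ℝ) • w) := by
    simpa [hx, NormedSpace.normalize_eq_self_of_norm_eq_one hx] using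
      hasFDerivAt_normalize (ne_zero_of_norm_eq_one hx)
  simpa [tangentProj_eq_self hw] using! hproj.comp_hasDerivAt 0 (hasDerivAt_add_smul x w 0)

lemma hasDerivAt_rankOne_self {γ : ℝ → V} {v : V} {t : ℝ} (hγ : HasDerivAt γ v t) :
    HasDerivAt (fun t => rankOne ℝ (γ t) (γ t)) (rankOne ℝ v (γ t) + rankOne ℝ (γ t) v) t := by
  have hdual : HasDerivAt (fun t => innerSL ℝ (γ t)) (innerSL ℝ v) t :=
    (innerSL ℝ).hasFDerivAt.comp_hasDerivAt t hγ
  have hmul := ((ContinuousLinearMap.smulRightL ℝ V V).hasFDerivAt_of_bilinear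
    hdual.hasFDerivAt hγ.hasFDerivAt).hasDerivAt
  simpa [rankOne_def, add_comm] using! hmul

variable [FiniteDimensional ℝ V] {E : V} {c : ℝ} {H : V → ℝ} {x : V}

namespace IsCapillarySupport

lemma exists_radiiOp_inverse (hH : IsCapillarySupport E c H) (hx : x ∈ unitCap E c) :
    ∃ S : V →L[ℝ] V, S.IsPositive ∧ S ∘L radiiOp H x = 1 ∧ S x = x := by
  have hx0 := ne_zero_of_norm_eq_one hx.1
  have hsymm : (radiiOp H x).IsSymmetric := fun v w => by
    change ⟪radiiOp H x v, w⟫ = ⟪v, radiiOp H x w⟫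
    rw [real_inner_comm (radiiOp H x w) v]
    simp only [radiiOp, add_apply, rankOne_apply, inner_add_left, real_inner_smul_left,
      hH.hess_symm hx0 v w]
    ring
  have hpos (w : V) (hw : w ≠ 0) : 0 < ⟪radiiOp H x w, w⟫ := by
    have hform : ⟪radiiOp H x w, w⟫ =
        ⟪hess H x (tangentProj x w), tangentProj x w⟫ + ⟪x, w⟫ ^ 2 := by
      rw [hH.inner_hess_tangentProj hx0, radiiOp, add_apply, inner_add_left, rankOne_apply,
        real_inner_smul_left, sq]
    rw [hform]
    rcases eq_or_ne (tangentProj x w) 0 with hT | hT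
    · have hrad : w = ⟪x, w⟫ • x := by rwa [tangentProj_apply, sub_eq_zero] at hT
      have hne : ⟪x, w⟫ ≠ 0 := fun h => hw (by rw [hrad, h, zero_smul])
      rw [hT, inner_zero_right, zero_add]
      positivity
    · exact add_pos_of_pos_of_nonneg (hH.inner_hess_pos x hx _ (inner_tangentProj_self hx.1 w) hT)
        (sq_nonneg _)
  obtain ⟨S, hS, hSA⟩ := exists_isPositive_inverse hsymm hpos
  refine ⟨S, hS, hSA, ?_⟩
  have hfix : radiiOp H x x = x := by simp [radiiOp, hH.hess_self hx0, hx.1]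
  simpa [hfix] using congrArg (· x) hSA

end IsCapillarySupport

lemma trace_comp_rankOne (S : V →L[ℝ] V) (v w : V) :
    LinearMap.trace ℝ V (S ∘L rankOne ℝ v w) = ⟪w, S v⟫ := by
  rw [comp_rankOne, trace_rankOne]

/-- `ψ` is the right-hand side of the equation `det (radiiOp H) = ψ` on the cap, with an upper bound
and a bound on its tangential logarithmic derivative. The latter may grow linearly in the Hessian of
`H`, as it does when `ψ` depends on the gradient of `H`. -/
structure IsControlledDensity (E : V) (c : ℝ) (H : V → ℝ) (Λ M : ℝ) (ψ : V → ℝ) : Prop where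
  det_radiiOp : ∀ x ∈ unitCap E c, (radiiOp H x).det = ψ x
  le : ∀ x ∈ unitCap E c, ψ x ≤ M
  differentiableAt : ∀ x ∈ unitCap E c, DifferentiableAt ℝ ψ x
  abs_fderiv_le : ∀ x ∈ unitCap E c, ∀ w, ⟪x, w⟫ = 0 →
    |fderiv ℝ ψ x w| ≤ ψ x * (Λ * (‖w‖ + ‖hess H x w‖))

variable {Λ M : ℝ} {ψ : V → ℝ}

lemma mul_trace_comp_fderiv_hess (hH : IsHomogeneousC3 H) (hψ : IsControlledDensity E c H Λ M ψ)
    (hx : ‖x‖ = 1) (hxc : c < ⟪E, x⟫) {S : V →L[ℝ] V} (hS : S.IsPositive)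
    (hSA : S ∘L radiiOp H x = 1) (hSx : S x = x) {w : V} (hw : ⟪x, w⟫ = 0) :
    ψ x * LinearMap.trace ℝ V (S ∘L fderiv ℝ (hess H) x w) = fderiv ℝ ψ x w := by
  set γ : ℝ → V := fun t => NormedSpace.normalize (x + t • w)
  have hγ : HasDerivAt γ w 0 := hasDerivAt_normalize_add_smul hx hw
  have hγ0 : γ 0 = x := by simp [γ, NormedSpace.normalize_eq_self_of_norm_eq_one hx]
  have hx_mem : x ∈ unitCap E c := ⟨hx, hxc.le⟩
  have hx0 := ne_zero_of_norm_eq_one hx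
  have hcap : ∀ᶠ t in 𝓝 (0 : ℝ), γ t ∈ unitCap E c := by
    have hinterior : ∀ᶠ t in 𝓝 (0 : ℝ), c < ⟪E, γ t⟫ :=
      (continuousAt_const.inner hγ.continuousAt).eventually_const_lt
        (show c < ⟪E, γ 0⟫ by rwa [hγ0])
    have hne : ∀ᶠ t in 𝓝 (0 : ℝ), x + t • w ≠ 0 :=
      (hasDerivAt_add_smul x w 0).continuousAt.eventually_ne (by simpa using hx0)
    filter_upwards [hinterior, hne] with t hct ht
    exact ⟨NormedSpace.norm_normalize_eq_one_iff.2 ht, hct.le⟩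
  have hradii : HasDerivAt (fun t => radiiOp H (γ t))
      (fderiv ℝ (hess H) x w + (rankOne ℝ w x + rankOne ℝ x w)) 0 := by
    have hhess : HasFDerivAt (hess H) (fderiv ℝ (hess H) x) (γ 0) := by
      simpa only [hγ0] using hH.hasFDerivAt_hess hx0
    have hnormal := hasDerivAt_rankOne_self hγ
    rw [hγ0] at hnormal
    exact (hhess.comp_hasDerivAt 0 hγ).add hnormal
  have hrhs : HasFDerivAt ψ (fderiv ℝ ψ x) (γ 0) := by
    simpa only [hγ0] using (hψ.differentiableAt x hx_mem).hasFDerivAt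
  have heq := (hasDerivAt_continuousLinearMap_det hradii (by rwa [hγ0])).unique
    ((hrhs.comp_hasDerivAt 0 hγ).congr_of_eventuallyEq (hcap.mono fun t ht => hψ.det_radiiOp _ ht))
  rw [hγ0, hψ.det_radiiOp x hx_mem] at heq
  rw [← heq]
  have hSw : ⟪x, S w⟫ = 0 := by
    rw [← hS.inner_left_eq_inner_right, hSx, hw]
  simp only [ContinuousLinearMap.comp_add, ContinuousLinearMap.toLinearMap_add, map_add,
    trace_comp_rankOne, hSw, hSx, real_inner_comm x w, hw, add_zero]

lemma IsControlledDensity.det_mul_eq_one (hψ : IsControlledDensity E c H Λ M ψ)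
    (hx : x ∈ unitCap E c) {S : V →L[ℝ] V} (hSA : S ∘L radiiOp H x = 1) :
    S.det * ψ x = 1 := by
  rw [← hψ.det_radiiOp x hx]
  have hdet := congrArg (fun T : V →L[ℝ] V => T.det) hSA
  simpa only [ContinuousLinearMap.det, ContinuousLinearMap.toLinearMap_comp, LinearMap.det_comp,
    ContinuousLinearMap.toLinearMap_one, map_one] using! hdet

lemma IsControlledDensity.pos (hψ : IsControlledDensity E c H Λ M ψ)
    (hx : x ∈ unitCap E c) {S : V →L[ℝ] V} (hS : S.IsPositive) (hSA : S ∘L radiiOp H x = 1) :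
    0 < ψ x := by
  have hdet := hψ.det_mul_eq_one hx hSA
  exact pos_of_mul_pos_right (hdet ▸ one_pos) (det_nonneg_of_isPositive hS)

lemma trace_comp_hess (hx : ‖x‖ = 1) {S : V →L[ℝ] V} (hSA : S ∘L radiiOp H x = 1)
    (hSx : S x = x) :
    LinearMap.trace ℝ V (S ∘L hess H x) = Module.finrank ℝ V - 1 := by
  have htrace := congrArg (fun T : V →L[ℝ] V => LinearMap.trace ℝ V T) hSA
  simp only [radiiOp, ContinuousLinearMap.comp_add, ContinuousLinearMap.toLinearMap_add, map_add,
    trace_comp_rankOne, hSx, real_inner_self_eq_norm_sq, hx, ContinuousLinearMap.toLinearMap_one,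
    LinearMap.trace_one] at htrace
  linarith

lemma abs_trace_comp_fderiv_hess_le (hH : IsHomogeneousC3 H)
    (hψ : IsControlledDensity E c H Λ M ψ) (hx : ‖x‖ = 1) (hxc : c < ⟪E, x⟫) (hE : ‖E‖ = 1)
    {S : V →L[ℝ] V} (hS : S.IsPositive) (hSA : S ∘L radiiOp H x = 1) (hSx : S x = x) :
    |LinearMap.trace ℝ V (S ∘L fderiv ℝ (hess H) x E)| ≤
      Λ * (‖tangentProj x E‖ + ‖hess H x E‖) + (Module.finrank ℝ V - 1) := by
  have hx_mem : x ∈ unitCap E c := ⟨hx, hxc.le⟩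
  have hx0 := ne_zero_of_norm_eq_one hx
  set τ := tangentProj x E
  have hτ : ⟪x, τ⟫ = 0 := inner_tangentProj_self hx E
  have hdecomp : E = τ + ⟪x, E⟫ • x := by simp [τ, tangentProj_apply]
  have hhess : hess H x E = hess H x τ := by simp [τ, tangentProj_apply, hH.hess_self hx0]
  have htang : |LinearMap.trace ℝ V (S ∘L fderiv ℝ (hess H) x τ)| ≤
      Λ * (‖τ‖ + ‖hess H x τ‖) := by
    have hψx := hψ.pos hx_mem hS hSA
    refine le_of_mul_le_mul_left ?_ hψx
    rw [← abs_of_pos hψx, ← abs_mul, mul_trace_comp_fderiv_hess hH hψ hx hxc hS hSA hSx hτ,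
      abs_of_pos hψx]
    exact hψ.abs_fderiv_le x hx_mem τ hτ
  have hrad : |⟪x, E⟫ * ((Module.finrank ℝ V : ℝ) - 1)| ≤ Module.finrank ℝ V - 1 := by
    have : Nontrivial V := ⟨x, 0, hx0⟩
    have hdim : (1 : ℝ) ≤ Module.finrank ℝ V := mod_cast Module.finrank_pos (R := ℝ) (M := V)
    have hs : |⟪x, E⟫| ≤ 1 := by simpa [hx, hE] using abs_real_inner_le_norm x E
    rw [abs_mul, abs_of_nonneg (sub_nonneg.2 hdim)]
    exact mul_le_of_le_one_left (sub_nonneg.2 hdim) hs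
  have hsplit : LinearMap.trace ℝ V (S ∘L fderiv ℝ (hess H) x E) =
      LinearMap.trace ℝ V (S ∘L fderiv ℝ (hess H) x τ) -
        ⟪x, E⟫ * (Module.finrank ℝ V - 1) := by
    have hDE : fderiv ℝ (hess H) x E = fderiv ℝ (hess H) x τ - ⟪x, E⟫ • hess H x := by
      nth_rw 1 [hdecomp]
      rw [map_add, map_smul, hH.fderiv_hess_self hx0, smul_neg, sub_eq_add_neg]
    rw [← trace_comp_hess hx hSA hSx, hDE]
    simp
  rw [hsplit, hhess]
  exact (abs_sub _ _).trans (add_le_add htang hrad)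

end LinearizedEquation

section Barrier

open Filter Topology InnerProductSpace

variable {V : Type*} [NormedAddCommGroup V] [InnerProductSpace ℝ V]

/-- The barrier for the normal second derivative. On the unit sphere `⟪E, y⟫ - c` is a defining
function of the cap and `⟪E, ∇H y⟫` vanishes on the boundary; `σ = 1` and `σ = -1` give the two
one-sided estimates. The normalization makes the function zero-homogeneous, so that its minimum
on the cap is a minimum in the ambient space. -/
def barrier [CompleteSpace V] (E : V) (c a N σ : ℝ) (H : V → ℝ) (y : V) : ℝ :=
  a * ((⟪E, NormedSpace.normalize y⟫ - c) - N * (⟪E, NormedSpace.normalize y⟫ - c) ^ 2) +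
    σ * ⟪E, gradient H y⟫

/-- The gradient of `barrier` away from the origin, in closed form. -/
def barrierGradient [CompleteSpace V] (E : V) (c a N σ : ℝ) (H : V → ℝ) (y : V) : V :=
  (a * (1 - 2 * N * (⟪E, NormedSpace.normalize y⟫ - c))) •
    (‖y‖⁻¹ • tangentProj (NormedSpace.normalize y) E) + σ • hess H y E

/-- The Hessian of `barrier` at a unit vector, in closed form. -/
def barrierHess [CompleteSpace V] (E : V) (c a N σ : ℝ) (H : V → ℝ) (x : V) : V →L[ℝ] V :=
  (a * (1 - 2 * N * (⟪E, x⟫ - c))) •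
      (-(rankOne ℝ (tangentProj x E) x + rankOne ℝ x (tangentProj x E) +
        ⟪E, x⟫ • tangentProj x)) -
    (2 * a * N) • rankOne ℝ (tangentProj x E) (tangentProj x E) + σ • fderiv ℝ (hess H) x E

variable {E : V} {c a N σ Λ M : ℝ} {H ψ : V → ℝ} {x : V}

lemma norm_tangentProj_le (hx : ‖x‖ = 1) (v : V) : ‖tangentProj x v‖ ≤ ‖v‖ := by
  rw [← sq_le_sq₀ (norm_nonneg _) (norm_nonneg _), norm_sq_tangentProj hx]
  exact sub_le_self _ (sq_nonneg _)

lemma normalize_add_smul_mem_unitCap (hE : ‖E‖ = 1) (hc : 0 ≤ c) (hx : ‖x‖ = 1)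
    (hxc : ⟪E, x⟫ = c) {t : ℝ} (hne : x + t • E ≠ 0) (ht : 0 ≤ t) :
    NormedSpace.normalize (x + t • E) ∈ unitCap E c := by
  refine ⟨NormedSpace.norm_normalize_eq_one_iff.2 hne, ?_⟩
  have hnorm : ‖x + t • E‖ ≤ 1 + t := by
    simpa [norm_smul, hx, hE, abs_of_nonneg ht] using norm_add_le x (t • E)
  have hinner : ⟪E, x + t • E⟫ = c + t := by
    rw [inner_add_right, real_inner_smul_right, hxc, real_inner_self_eq_norm_sq, hE]
    ring
  have hc1 : c ≤ 1 := hxc ▸ inner_le_one hE hx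
  rw [NormedSpace.normalize, real_inner_smul_right, ← div_eq_inv_mul,
    le_div_iff₀ (norm_pos_iff.2 hne), hinner]
  nlinarith [mul_le_mul_of_nonneg_left hnorm hc, mul_le_mul_of_nonneg_right hc1 ht]

lemma exists_barrier_parameters (hc : 0 < c) (hc1 : c < 1) (B : ℝ) :
    ∃ N δ : ℝ, 0 ≤ N ∧ 0 < δ ∧ N * δ ≤ 1 / 4 ∧
      ∀ s, c < s → s < c + δ → B < 4 * N / c * (1 - s ^ 2) := by
  set κ := 1 - ((1 + c) / 2) ^ 2 with hκ_def
  have hκ : 0 < κ := by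
    rw [hκ_def]
    nlinarith
  obtain ⟨k, hk⟩ := exists_nat_gt (B * c / (4 * κ))
  have hN : (0 : ℝ) < k + 1 := by positivity
  refine ⟨k + 1, min (1 / (4 * (k + 1))) ((1 - c) / 2), hN.le,
    lt_min (by positivity) (by linarith), ?_, fun s hs hsδ => ?_⟩
  · exact (mul_le_mul_of_nonneg_left (min_le_left _ _) hN.le).trans_eq (by field_simp)
  · have hs_mid : s ≤ (1 + c) / 2 := by
      linarith [min_le_right (1 / (4 * (k + 1 : ℝ))) ((1 - c) / 2)]
    have hs_sq : s ^ 2 ≤ ((1 + c) / 2) ^ 2 := pow_le_pow_left₀ (hc.trans hs).le hs_mid 2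
    calc B = 4 * (B * c / (4 * κ)) / c * κ := by field_simp
      _ < 4 * (k + 1) / c * κ := by gcongr; linarith
      _ ≤ 4 * (k + 1) / c * (1 - s ^ 2) := by
        gcongr
        linarith

section Derivatives

variable [CompleteSpace V]

lemma hasGradientAt_barrier (hH : IsHomogeneousC3 H) {y : V} (hy : y ≠ 0) :
    HasGradientAt (barrier E c a N σ H) (barrierGradient E c a N σ H y) y := by
  rw [hasGradientAt_iff_hasFDerivAt]
  have hs := (hasGradientAt_inner_normalize E hy).hasFDerivAt.sub_const c
  have hg := (hasFDerivAt_const E y).inner ℝ (hH.hasFDerivAt_gradient hy)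
  refine (((hs.sub ((hs.pow 2).const_mul N)).const_mul a).add (hg.const_mul σ)).congr_fderiv ?_
  ext w
  simp only [map_smul, Nat.add_one_sub_one, pow_one, nsmul_eq_mul, Nat.cast_ofNat, add_apply,
    smul_apply, sub_apply, toDual_apply_apply, smul_eq_mul, ContinuousLinearMap.comp_apply,
    ContinuousLinearMap.prod_apply, zero_apply, fderivInnerCLM_apply, inner_zero_left, add_zero,
    barrierGradient, map_add, hH.hess_symm hy E w, real_inner_comm E]
  ring

lemma hasFDerivAt_barrierGradient (hH : IsHomogeneousC3 H) (hx : ‖x‖ = 1) :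
    HasFDerivAt (barrierGradient E c a N σ H) (barrierHess E c a N σ H x) x := by
  have hx0 := ne_zero_of_norm_eq_one hx
  have hs := (((hasGradientAt_inner_normalize E hx0).hasFDerivAt.sub_const c).const_mul
    (2 * N)).const_sub 1 |>.const_mul a
  have hhess := (hH.hasFDerivAt_hess hx0).clm_apply (hasFDerivAt_const E x)
  refine ((hs.smul (hasFDerivAt_gradient_inner_normalize E hx)).add
    (hhess.const_smul σ)).congr_fderiv ?_
  ext w
  simp only [NormedSpace.normalize_eq_self_of_norm_eq_one hx, hx, inv_one, one_smul,
    ContinuousLinearMap.comp_zero, zero_add, add_apply, neg_apply, sub_apply, smul_apply,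
    rankOne_apply, ContinuousLinearMap.smulRight_apply, toDual_apply_apply, smul_eq_mul,
    ContinuousLinearMap.flip_apply, barrierHess, hH.fderiv_hess_symm hx0 E w]
  module

lemma barrier_normalize (hH : IsHomogeneousC3 H) {y : V} (hy : y ≠ 0) :
    barrier E c a N σ H (NormedSpace.normalize y) = barrier E c a N σ H y := by
  rw [barrier, barrier, hH.gradient_normalize hy, NormedSpace.normalize_eq_self_of_norm_eq_one
    (NormedSpace.norm_normalize_eq_one_iff.2 hy)]

end Derivatives

variable [FiniteDimensional ℝ V]

lemma trace_comp_barrierHess (hx : ‖x‖ = 1) {S : V →L[ℝ] V} (hS : S.IsPositive)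
    (hSx : S x = x) :
    LinearMap.trace ℝ V (S ∘L barrierHess E c a N σ H x) =
      -(a * (1 - 2 * N * (⟪E, x⟫ - c)) * ⟪E, x⟫ * (LinearMap.trace ℝ V S - 1)) -
        2 * a * N * ⟪S (tangentProj x E), tangentProj x E⟫ +
        σ * LinearMap.trace ℝ V (S ∘L fderiv ℝ (hess H) x E) := by
  have hSτ : ⟪x, S (tangentProj x E)⟫ = 0 := by
    rw [← hS.inner_left_eq_inner_right, hSx, inner_tangentProj_self hx]
  have hproj : LinearMap.trace ℝ V (S ∘L tangentProj x) = LinearMap.trace ℝ V S - 1 := by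
    have hone : S ∘L ContinuousLinearMap.id ℝ V = S := S.comp_id
    simp only [tangentProj, ContinuousLinearMap.comp_sub, ContinuousLinearMap.toLinearMap_sub,
      map_sub, trace_comp_rankOne, hone, hSx, real_inner_self_eq_norm_sq, hx, one_pow]
  simp only [barrierHess, ContinuousLinearMap.comp_add, ContinuousLinearMap.comp_sub,
    ContinuousLinearMap.comp_neg, ContinuousLinearMap.comp_smul,
    ContinuousLinearMap.toLinearMap_add, ContinuousLinearMap.toLinearMap_sub,
    ContinuousLinearMap.toLinearMap_neg, ContinuousLinearMap.toLinearMap_smul, map_add, map_sub,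
    map_neg, map_smul, smul_eq_mul, trace_comp_rankOne, hproj, hSτ, hSx,
    real_inner_comm x (tangentProj x E), inner_tangentProj_self hx,
    real_inner_comm (S (tangentProj x E)) (tangentProj x E)]
  ring

lemma norm_hess_le_of_isLocalMin_barrier (hH : IsHomogeneousC3 H) (hE : ‖E‖ = 1) (hx : ‖x‖ = 1)
    (hxc : c ≤ ⟪E, x⟫) (hN : 0 ≤ N) (hs : N * (⟪E, x⟫ - c) ≤ 1 / 4) (ha : 0 ≤ a) (hσ : |σ| = 1)
    (hmin : IsLocalMin (barrier E c a N σ H) x) : ‖hess H x E‖ ≤ a := by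
  have hzero : barrierGradient E c a N σ H x = 0 := (toDual ℝ V).map_eq_zero_iff.1
    (hmin.hasFDerivAt_eq_zero (hasGradientAt_barrier hH (ne_zero_of_norm_eq_one hx)).hasFDerivAt)
  rw [barrierGradient, NormedSpace.normalize_eq_self_of_norm_eq_one hx, hx, inv_one, one_smul,
    add_eq_zero_iff_eq_neg] at hzero
  have hnorm := congrArg norm hzero
  rw [norm_neg, norm_smul, norm_smul, Real.norm_eq_abs σ, hσ, one_mul, Real.norm_eq_abs] at hnorm
  have hcoef : |a * (1 - 2 * N * (⟪E, x⟫ - c))| ≤ a := by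
    have := mul_nonneg hN (sub_nonneg.2 hxc)
    rw [abs_of_nonneg (mul_nonneg ha (by linarith))]
    exact mul_le_of_le_one_right ha (by linarith)
  have hτ : ‖tangentProj x E‖ ≤ 1 := hE ▸ norm_tangentProj_le hx E
  rw [← hnorm]
  exact (mul_le_mul hcoef hτ (norm_nonneg _) ha).trans_eq (mul_one a)

lemma mul_trace_comp_fderiv_hess_le_of_isLocalMin_barrier (hH : IsHomogeneousC3 H)
    (hψ : IsControlledDensity E c H Λ M ψ) (hΛ : 0 ≤ Λ) (hE : ‖E‖ = 1) (hx : ‖x‖ = 1)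
    (hxc : c < ⟪E, x⟫) (hN : 0 ≤ N) (hs : N * (⟪E, x⟫ - c) ≤ 1 / 4) (ha : 1 ≤ a)
    (hσ : |σ| = 1) (hmin : IsLocalMin (barrier E c a N σ H) x) {S : V →L[ℝ] V}
    (hS : S.IsPositive) (hSA : S ∘L radiiOp H x = 1) (hSx : S x = x) :
    σ * LinearMap.trace ℝ V (S ∘L fderiv ℝ (hess H) x E) ≤
      a * (2 * Λ + (Module.finrank ℝ V - 1)) := by
  have : Nontrivial V := ⟨x, 0, ne_zero_of_norm_eq_one hx⟩
  have hdim : (1 : ℝ) ≤ Module.finrank ℝ V := mod_cast Module.finrank_pos (R := ℝ) (M := V)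
  have hτ : ‖tangentProj x E‖ ≤ 1 := hE ▸ norm_tangentProj_le hx E
  have hhess := norm_hess_le_of_isLocalMin_barrier hH hE hx hxc.le hN hs (by linarith) hσ hmin
  calc σ * LinearMap.trace ℝ V (S ∘L fderiv ℝ (hess H) x E)
      ≤ |LinearMap.trace ℝ V (S ∘L fderiv ℝ (hess H) x E)| := by
        simpa [abs_mul, hσ] using le_abs_self (σ * LinearMap.trace ℝ V _)
    _ ≤ Λ * (‖tangentProj x E‖ + ‖hess H x E‖) + (Module.finrank ℝ V - 1) :=
        abs_trace_comp_fderiv_hess_le hH hψ hx hxc hE hS hSA hSx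
    _ ≤ Λ * (a + a) + a * (Module.finrank ℝ V - 1) := by
        gcongr
        · exact hτ.trans ha
        · exact le_mul_of_one_le_left (sub_nonneg.2 hdim) ha
    _ = a * (2 * Λ + (Module.finrank ℝ V - 1)) := by ring

lemma trace_add_le_of_isLocalMin_barrier (hH : IsHomogeneousC3 H)
    (hψ : IsControlledDensity E c H Λ M ψ) (hΛ : 0 ≤ Λ) (hE : ‖E‖ = 1) (hx : ‖x‖ = 1)
    (hc : 0 < c) (hxc : c < ⟪E, x⟫) (hN : 0 ≤ N) (hs : N * (⟪E, x⟫ - c) ≤ 1 / 4) (ha : 1 ≤ a)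
    (hσ : |σ| = 1) (hmin : IsLocalMin (barrier E c a N σ H) x) {S : V →L[ℝ] V}
    (hS : S.IsPositive) (hSA : S ∘L radiiOp H x = 1) (hSx : S x = x) :
    c / 2 * LinearMap.trace ℝ V S + 2 * N * ⟪S (tangentProj x E), tangentProj x E⟫ ≤
      Module.finrank ℝ V + 2 * Λ := by
  have ha0 : 0 < a := one_pos.trans_le ha
  have hx0 := ne_zero_of_norm_eq_one hx
  have hnonneg : 0 ≤ LinearMap.trace ℝ V (S ∘L barrierHess E c a N σ H x) :=
    trace_comp_nonneg hS (inner_fderiv_gradient_nonneg_of_isLocalMin hmin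
      ((isOpen_ne.eventually_mem hx0).mono fun y hy => hasGradientAt_barrier hH hy)
      (hasFDerivAt_barrierGradient hH hx))
  rw [trace_comp_barrierHess hx hS hSx] at hnonneg
  set T := LinearMap.trace ℝ V S
  set Q := ⟪S (tangentProj x E), tangentProj x E⟫
  set β := (1 - 2 * N * (⟪E, x⟫ - c)) * ⟪E, x⟫
  have hT : 0 ≤ T := hS.toLinearMap.trace_nonneg
  have hthird := mul_trace_comp_fderiv_hess_le_of_isLocalMin_barrier hH hψ hΛ hE hx hxc hN hs ha hσ
    hmin hS hSA hSx
  have hβ : c / 2 ≤ β ∧ β ≤ 1 := by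
    have := mul_nonneg hN (sub_nonneg.2 hxc.le)
    have := inner_le_one hE hx
    constructor <;> nlinarith
  have hdivided : β * (T - 1) + 2 * N * Q ≤ 2 * Λ + (Module.finrank ℝ V - 1) := by
    refine le_of_mul_le_mul_left ?_ ha0
    linear_combination hnonneg + hthird
  linarith [mul_le_mul_of_nonneg_right hβ.1 hT]

lemma not_isLocalMin_barrier (hH : IsCapillarySupport E c H)
    (hψ : IsControlledDensity E c H Λ M ψ) (hΛ : 0 ≤ Λ) (hE : ‖E‖ = 1) (hx : ‖x‖ = 1)
    (hc : 0 < c) (hxc : c < ⟪E, x⟫) (hN : 0 ≤ N) (hs : N * (⟪E, x⟫ - c) ≤ 1 / 4)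
    (hNM : M * (2 / c * (Module.finrank ℝ V + 2 * Λ)) ^ Module.finrank ℝ V <
      1 + 4 * N / c * ‖tangentProj x E‖ ^ 2) (ha : 1 ≤ a) (hσ : |σ| = 1) :
    ¬ IsLocalMin (barrier E c a N σ H) x := by
  intro hmin
  have hx_mem : x ∈ unitCap E c := ⟨hx, hxc.le⟩
  obtain ⟨S, hS, hSA, hSx⟩ := hH.exists_radiiOp_inverse hx_mem
  have htrace := trace_add_le_of_isLocalMin_barrier hH.toIsHomogeneousC3 hψ hΛ hE hx hc hxc hN hs
    ha hσ hmin hS hSA hSx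
  set τ := tangentProj x E
  set m := Module.finrank ℝ V
  have hψx := hψ.pos hx_mem hS hSA
  have hsum : LinearMap.trace ℝ V S + 4 * N / c * ⟪S τ, τ⟫ ≤ 2 / c * (m + 2 * Λ) := by
    have hscale := mul_le_mul_of_nonneg_left htrace (by positivity : 0 ≤ 2 / c)
    have hexpand : 2 / c * (c / 2 * LinearMap.trace ℝ V S + 2 * N * ⟪S τ, τ⟫) =
        LinearMap.trace ℝ V S + 4 * N / c * ⟪S τ, τ⟫ := by
      field_simp
      ring
    rwa [hexpand] at hscale
  refine hNM.not_ge ?_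
  calc 1 + 4 * N / c * ‖τ‖ ^ 2 = ψ x * (S.det * (1 + 4 * N / c * ‖τ‖ ^ 2)) := by
        linear_combination -(1 + 4 * N / c * ‖τ‖ ^ 2) * hψ.det_mul_eq_one hx_mem hSA
    _ ≤ ψ x * (LinearMap.trace ℝ V S + 4 * N / c * ⟪S τ, τ⟫) ^ m := by
        gcongr
        exact det_mul_le_trace_add_pow hS (by positivity) τ
    _ ≤ M * (2 / c * (m + 2 * Λ)) ^ m := by
        have hM : ψ x ≤ M := hψ.le x hx_mem
        have hnonneg := add_nonneg hS.toLinearMap.trace_nonneg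
          (mul_nonneg (by positivity : 0 ≤ 4 * N / c) (hS.inner_nonneg_left τ))
        have hM0 : 0 ≤ M := hψx.le.trans hM
        gcongr

variable {K δ : ℝ}

lemma barrier_eq_zero (hH : IsCapillarySupport E c H) (hx : ‖x‖ = 1) (hxc : ⟪E, x⟫ = c) :
    barrier E c a N σ H x = 0 := by
  simp [barrier, NormedSpace.normalize_eq_self_of_norm_eq_one hx, hxc,
    hH.inner_gradient_eq_zero x hx hxc]

lemma barrier_nonneg_of_inner_eq_add (hE : ‖E‖ = 1) (hδ : 0 ≤ δ) (hN : N * δ ≤ 1 / 4)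
    (ha : 0 ≤ a) (hσ : |σ| = 1) (hx : ‖x‖ = 1) (hK : ‖gradient H x‖ ≤ K) (haK : 2 * K ≤ a * δ)
    (hxδ : ⟪E, x⟫ = c + δ) : 0 ≤ barrier E c a N σ H x := by
  have hgrad : |σ * ⟪E, gradient H x⟫| ≤ K := by
    rw [abs_mul, hσ, one_mul]
    exact (abs_real_inner_le_norm _ _).trans (by rwa [hE, one_mul])
  rw [barrier, NormedSpace.normalize_eq_self_of_norm_eq_one hx, hxδ]
  nlinarith [neg_le_of_abs_le hgrad, mul_le_mul_of_nonneg_left hN (mul_nonneg ha hδ),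
    mul_nonneg ha hδ]

lemma barrier_nonneg (hH : IsCapillarySupport E c H) (hE : ‖E‖ = 1) (hδ : 0 ≤ δ)
    (hN : N * δ ≤ 1 / 4) (ha : 0 ≤ a) (hσ : |σ| = 1)
    (hK : ∀ z ∈ unitCap E c, ‖gradient H z‖ ≤ K) (haK : 2 * K ≤ a * δ)
    (hmin : ∀ z, ‖z‖ = 1 → c < ⟪E, z⟫ → ⟪E, z⟫ < c + δ → ¬ IsLocalMin (barrier E c a N σ H) z)
    (hx : x ∈ unitCap E c) (hxδ : ⟪E, x⟫ ≤ c + δ) : 0 ≤ barrier E c a N σ H x := by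
  have hcont : Continuous fun y : V => ⟪E, y⟫ := continuous_const.inner continuous_id
  have hcompact : IsCompact (unitCap E c ∩ {y | ⟪E, y⟫ ≤ c + δ}) :=
    (isCompact_unitCap E c).inter_right (isClosed_le hcont continuous_const)
  obtain ⟨z, ⟨hz, hzδ⟩, hzmin⟩ := hcompact.exists_isMinOn ⟨x, hx, hxδ⟩
    fun y hy => ((hasGradientAt_barrier (a := a) (N := N) (σ := σ) hH.toIsHomogeneousC3
      (ne_zero_of_norm_eq_one hy.1.1)).hasFDerivAt.continuousAt).continuousWithinAt
  refine le_trans ?_ (hzmin ⟨hx, hxδ⟩)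
  rcases hz.2.eq_or_lt with hzc | hzc
  · exact (barrier_eq_zero hH hz.1 hzc.symm).ge
  rcases (show ⟪E, z⟫ ≤ c + δ from hzδ).eq_or_lt with hzδ | hzδ
  · exact barrier_nonneg_of_inner_eq_add hE hδ hN ha hσ hz.1 (hK z hz) haK hzδ
  refine absurd (isLocalMin_of_isLocalMinOn_sphere
    (fun y hy => barrier_normalize hH.toIsHomogeneousC3 hy) hz.1 ?_) (hmin z hz.1 hzc hzδ)
  filter_upwards [nhdsWithin_le_nhds (hcont.continuousAt.eventually_const_lt hzc),
    nhdsWithin_le_nhds (hcont.continuousAt.eventually_lt_const hzδ), self_mem_nhdsWithin]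
    with y hyc hyδ hy
  exact hzmin ⟨⟨by simpa using hy, hyc.le⟩, hyδ.le⟩

lemma inner_hess_nonneg_of_barrier_nonneg (hH : IsCapillarySupport E c H) (hE : ‖E‖ = 1)
    (hc : 0 ≤ c) (hδ : 0 < δ)
    (hnonneg : ∀ z ∈ unitCap E c, ⟪E, z⟫ ≤ c + δ → 0 ≤ barrier E c a N σ H z) (hx : ‖x‖ = 1)
    (hxc : ⟪E, x⟫ = c) : 0 ≤ a * (1 - c ^ 2) + σ * ⟪hess H x E, E⟫ := by
  have hx0 := ne_zero_of_norm_eq_one hx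
  have hgrad : HasGradientAt (barrier E c a N σ H) (barrierGradient E c a N σ H x)
      (x + (0 : ℝ) • E) := by
    simpa only [zero_smul, add_zero] using hasGradientAt_barrier hH.toIsHomogeneousC3 hx0
  have hderiv := hasDerivAt_comp_of_hasGradientAt hgrad (hasDerivAt_add_smul x E 0)
  have hvalue : ⟪barrierGradient E c a N σ H x, E⟫ =
      a * (1 - c ^ 2) + σ * ⟪hess H x E, E⟫ := by
    have hxE : ⟪x, E⟫ = c := real_inner_comm E x ▸ hxc
    simp only [barrierGradient, NormedSpace.normalize_eq_self_of_norm_eq_one hx, hx, hxc, hxE,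
      inner_add_left, real_inner_smul_left, tangentProj_apply, inner_sub_left,
      real_inner_self_eq_norm_sq, hE]
    ring
  rw [← hvalue]
  refine deriv_nonneg_of_eventually_ge hderiv ?_
  have hne : ∀ᶠ t in 𝓝 (0 : ℝ), x + t • E ≠ 0 :=
    (hasDerivAt_add_smul x E 0).continuousAt.eventually_ne (by simpa using hx0)
  have hstrip : ∀ᶠ t in 𝓝 (0 : ℝ), ⟪E, NormedSpace.normalize (x + t • E)⟫ < c + δ := by
    have hcont : ContinuousAt (fun t : ℝ => ⟪E, NormedSpace.normalize (x + t • E)⟫) 0 :=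
      continuousAt_const.inner (ContinuousAt.comp (f := fun t : ℝ => x + t • E)
        (continuousAt_normalize (by simpa using hx0)) (hasDerivAt_add_smul x E 0).continuousAt)
    refine hcont.eventually_lt_const ?_
    simp [NormedSpace.normalize_eq_self_of_norm_eq_one hx, hxc, hδ]
  filter_upwards [nhdsWithin_le_nhds hne, nhdsWithin_le_nhds hstrip, self_mem_nhdsWithin]
    with t ht htδ htpos
  rw [zero_smul, add_zero, barrier_eq_zero hH hx hxc, ← barrier_normalize hH.toIsHomogeneousC3 ht]
  exact hnonneg _ (normalize_add_smul_mem_unitCap hE hc hx hxc ht (mem_Ioi.1 htpos).le)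
    htδ.le

theorem exists_forall_abs_inner_hess_le (hE : ‖E‖ = 1) (hc : 0 < c) (hc1 : c < 1) (hΛ : 0 ≤ Λ)
    (M K : ℝ) : ∃ a : ℝ, 0 < a ∧ ∀ H ψ : V → ℝ, IsCapillarySupport E c H →
      IsControlledDensity E c H Λ M ψ → (∀ z ∈ unitCap E c, ‖gradient H z‖ ≤ K) →
      ∀ x, ‖x‖ = 1 → ⟪E, x⟫ = c → |⟪hess H x E, E⟫| ≤ a * (1 - c ^ 2) := by
  obtain ⟨N, δ, hN, hδ, hNδ, hNM⟩ := exists_barrier_parameters hc hc1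
    (M * (2 / c * (Module.finrank ℝ V + 2 * Λ)) ^ Module.finrank ℝ V)
  set a := max 1 (2 * K / δ)
  have ha : 1 ≤ a := le_max_left _ _
  have haK : 2 * K ≤ a * δ := (div_le_iff₀ hδ).1 (le_max_right _ _)
  refine ⟨a, one_pos.trans_le ha, fun H ψ hH hψ hK x hx hxc => ?_⟩
  have hstrip (σ : ℝ) (hσ : |σ| = 1) (z : V) (hz : ‖z‖ = 1) (hzc : c < ⟪E, z⟫)
      (hzδ : ⟪E, z⟫ < c + δ) : ¬ IsLocalMin (barrier E c a N σ H) z := by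
    have hzN : N * (⟪E, z⟫ - c) ≤ 1 / 4 :=
      (mul_le_mul_of_nonneg_left (by linarith) hN).trans hNδ
    refine not_isLocalMin_barrier hH hψ hΛ hE hz hc hzc hN hzN ?_ ha hσ
    rw [norm_sq_tangentProj hz, hE, one_pow, real_inner_comm E z]
    linarith [hNM ⟪E, z⟫ hzc hzδ]
  have hbound (σ : ℝ) (hσ : |σ| = 1) : 0 ≤ a * (1 - c ^ 2) + σ * ⟪hess H x E, E⟫ :=
    inner_hess_nonneg_of_barrier_nonneg hH hE hc.le hδ
      (fun z hz hzδ => barrier_nonneg hH hE hδ.le hNδ (zero_le_one.trans ha) hσ hK haK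
        (hstrip σ hσ) hz hzδ) hx hxc
  rw [abs_le]
  constructor <;> linarith [hbound 1 (by simp), hbound (-1) (by simp)]

end Barrier

section RadialExtension

open Filter Topology InnerProductSpace

variable {V : Type*} [NormedAddCommGroup V] [InnerProductSpace ℝ V] {z₀ x : V} {h : V → ℝ}

/-- The one-homogeneous function whose restriction to the unit sphere is `h`, transported from the
unit sphere centred at `z₀`. -/
def radialExtension (z₀ : V) (h : V → ℝ) (y : V) : ℝ := ‖y‖ * h (z₀ + NormedSpace.normalize y)

lemma isHomogeneousC3_radialExtension (z₀ : V) (hh : ContDiff ℝ 3 h) :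
    IsHomogeneousC3 (radialExtension z₀ h) where
  contDiffAt y hy := by
    have hnorm : ContDiffAt ℝ 3 (fun y : V => ‖y‖) y := contDiffAt_norm ℝ hy
    exact hnorm.mul (hh.contDiffAt.comp y
      (contDiffAt_const.add ((hnorm.inv (norm_ne_zero_iff.2 hy)).smul contDiffAt_id)))
  map_smul y t ht := by
    simp only [radialExtension, NormedSpace.normalize_smul_of_pos ht, norm_smul,
      Real.norm_of_nonneg ht.le, mul_assoc]

lemma radialExtension_of_norm_eq_one (z₀ : V) (h : V → ℝ) (hx : ‖x‖ = 1) :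
    radialExtension z₀ h x = h (z₀ + x) := by
  rw [radialExtension, NormedSpace.normalize_eq_self_of_norm_eq_one hx, hx, one_mul]

variable [CompleteSpace V]

lemma hasFDerivAt_comp_add_normalize (hh : Differentiable ℝ h) (hx : x ≠ 0) :
    HasFDerivAt (fun y => h (z₀ + NormedSpace.normalize y))
      (‖x‖⁻¹ • toDual ℝ V (tangentProj (NormedSpace.normalize x)
        (gradient h (z₀ + NormedSpace.normalize x)))) x := by
  refine ((hh _).hasGradientAt.hasFDerivAt.comp x
    ((hasFDerivAt_normalize hx).const_add z₀)).congr_fderiv ?_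
  ext w
  simp only [ContinuousLinearMap.comp_apply, smul_apply, map_smul, toDual_apply_apply,
    inner_tangentProj_right]

lemma gradient_radialExtension (hh : Differentiable ℝ h) (hx : x ≠ 0) :
    gradient (radialExtension z₀ h) x =
      h (z₀ + NormedSpace.normalize x) • NormedSpace.normalize x +
        tangentProj (NormedSpace.normalize x) (gradient h (z₀ + NormedSpace.normalize x)) := by
  refine HasGradientAt.gradient (hasGradientAt_iff_hasFDerivAt.2 ?_)
  refine ((hasFDerivAt_norm hx).mul (hasFDerivAt_comp_add_normalize hh hx)).congr_fderiv ?_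
  ext w
  have hx' : ‖x‖ ≠ 0 := norm_ne_zero_iff.2 hx
  simp [hx', add_comm]

lemma hess_radialExtension (hh : ContDiff ℝ 2 h) (hx : ‖x‖ = 1) :
    hess (radialExtension z₀ h) x =
      tangentProj x ∘L hess h (z₀ + x) ∘L tangentProj x +
        (h (z₀ + x) - ⟪gradient h (z₀ + x), x⟫) • tangentProj x := by
  have hx0 := ne_zero_of_norm_eq_one hx
  have hxn := NormedSpace.normalize_eq_self_of_norm_eq_one hx
  have hdiff : Differentiable ℝ h := hh.differentiable (by norm_num)
  have hnormalize := hasFDerivAt_normalize hx0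
  have hgrad : HasFDerivAt (fun y => gradient h (z₀ + NormedSpace.normalize y))
      (hess h (z₀ + x) ∘L tangentProj x) x := by
    have hcomp := (hasFDerivAt_gradient (hh.contDiffAt (x := z₀ + NormedSpace.normalize x))).comp x
      (hnormalize.const_add z₀)
    rwa [hxn, hx, inv_one, one_smul] at hcomp
  have hfield := ((hasFDerivAt_comp_add_normalize (z₀ := z₀) hdiff hx0).smul hnormalize).add
    (hgrad.sub ((hnormalize.inner ℝ hgrad).smul hnormalize))
  refine ((hfield.congr_of_eventuallyEq ?_).fderiv).trans ?_
  · filter_upwards [isOpen_ne.eventually_mem hx0] with y hy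
    rw [gradient_radialExtension hdiff hy, tangentProj_apply]
    rfl
  · ext w
    simp only [hxn, hx, inv_one, one_smul, tangentProj_apply, inner_gradient_right, ringHom_apply,
      map_sub, toDual_gradient, map_smul, add_apply, smul_apply,
      ContinuousLinearMap.smulRight_apply, sub_apply, toDual_apply_apply, smul_eq_mul,
      ContinuousLinearMap.comp_apply, ContinuousLinearMap.prod_apply, fderivInnerCLM_apply,
      real_inner_comm x, inner_sub_right, real_inner_smul_right]
    module

lemma inner_hess_radialExtension (hh : ContDiff ℝ 2 h) (hx : ‖x‖ = 1) {v w : V}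
    (hv : ⟪x, v⟫ = 0) (hw : ⟪x, w⟫ = 0) :
    ⟪hess (radialExtension z₀ h) x v, w⟫ =
      ⟪hess h (z₀ + x) v, w⟫ - ⟪gradient h (z₀ + x), x⟫ * ⟪v, w⟫ + h (z₀ + x) * ⟪v, w⟫ := by
  simp only [hess_radialExtension hh hx, add_apply, ContinuousLinearMap.comp_apply, smul_apply,
    tangentProj_eq_self hv, inner_add_left, real_inner_smul_left, ← inner_tangentProj_right,
    tangentProj_eq_self hw]
  ring

lemma norm_sq_gradient_radialExtension (hh : Differentiable ℝ h) (hx : ‖x‖ = 1) :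
    ‖gradient (radialExtension z₀ h) x‖ ^ 2 =
      h (z₀ + x) ^ 2 + ‖tangentProj x (gradient h (z₀ + x))‖ ^ 2 := by
  rw [gradient_radialExtension hh (ne_zero_of_norm_eq_one hx),
    NormedSpace.normalize_eq_self_of_norm_eq_one hx, norm_add_sq_real, real_inner_smul_left,
    inner_tangentProj_self hx, norm_smul, hx, Real.norm_eq_abs, mul_one, sq_abs]
  ring

end RadialExtension

section PowerDensity

open Filter Topology InnerProductSpace

variable {V : Type*} [NormedAddCommGroup V] [InnerProductSpace ℝ V]

lemma hasFDerivAt_mul_rpow_mul_rpow {φ u g : V → ℝ} {φ' u' g' : V →L[ℝ] ℝ} {x : V} {r s : ℝ}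
    (hφ : HasFDerivAt φ φ' x) (hu : HasFDerivAt u u' x) (hg : HasFDerivAt g g' x)
    (hφ0 : φ x ≠ 0) (hu0 : 0 < u x) (hg0 : 0 < g x) :
    HasFDerivAt (fun y => φ y * u y ^ r * g y ^ s)
      ((φ x * u x ^ r * g x ^ s) • ((1 / φ x) • φ' + (r / u x) • u' + (s / g x) • g')) x := by
  refine ((hφ.mul (hu.rpow_const (.inl hu0.ne'))).mul
    (hg.rpow_const (.inl hg0.ne'))).congr_fderiv ?_
  ext w
  have hu0' := hu0.ne'
  have hg0' := hg0.ne'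
  simp only [add_apply, smul_apply, smul_eq_mul, Pi.mul_apply,
    Real.rpow_sub_one hu0', Real.rpow_sub_one hg0']
  field_simp
  ring

lemma rpow_le_rpow_add_rpow {m M t : ℝ} (hm : 0 < m) (hmt : m ≤ t) (htM : t ≤ M) (r : ℝ) :
    t ^ r ≤ m ^ r + M ^ r := by
  have hM : 0 ≤ M := hm.le.trans (hmt.trans htM)
  rcases le_total 0 r with hr | hr
  · linarith [Real.rpow_le_rpow (hm.le.trans hmt) htM hr, Real.rpow_nonneg hm.le r]
  · linarith [Real.rpow_le_rpow_of_nonpos hm hmt hr, Real.rpow_nonneg hM r]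

lemma abs_div_mul_inner_le {m t K : ℝ} {u : V} (a : ℝ) (w : V) (hm : 0 < m) (hmt : m ≤ t)
    (hu : ‖u‖ ≤ K) : |a / t * ⟪u, w⟫| ≤ |a| * K / m * ‖w‖ := by
  have ht : 0 < t := hm.trans_le hmt
  have hK : 0 ≤ K := (norm_nonneg u).trans hu
  calc |a / t * ⟪u, w⟫| = |a| * |⟪u, w⟫| / t := by
        rw [abs_mul, abs_div, abs_of_pos ht, div_mul_eq_mul_div]
    _ ≤ |a| * (K * ‖w‖) / m := by
        gcongr
        exact (abs_real_inner_le_norm u w).trans (by gcongr)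
    _ = |a| * K / m * ‖w‖ := by ring

variable [CompleteSpace V]

/-- The right-hand side `f H ^ r |∇H| ^ (2 s)` of the equation, where the datum `f` lives on the
unit sphere centred at `z₀` and is extended to be constant along rays. -/
def powerDensity (z₀ : V) (f H : V → ℝ) (r s : ℝ) (y : V) : ℝ :=
  f (z₀ + NormedSpace.normalize y) * H y ^ r * (‖gradient H y‖ ^ 2) ^ s

variable {z₀ E x : V} {f H : V → ℝ} {r s c m₁ m₂ K₁ K₂ K : ℝ}

lemma IsHomogeneousC3.le_norm_gradient (hH : IsHomogeneousC3 H) (hx : ‖x‖ = 1) :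
    H x ≤ ‖gradient H x‖ := by
  have hinner := real_inner_le_norm (gradient H x) x
  rwa [hH.inner_gradient_self (ne_zero_of_norm_eq_one hx), hx, mul_one] at hinner

lemma hasFDerivAt_powerDensity (hf : Differentiable ℝ f) (hH : IsHomogeneousC3 H) (hx : ‖x‖ = 1)
    (hf0 : f (z₀ + x) ≠ 0) (hH0 : 0 < H x) :
    HasFDerivAt (powerDensity z₀ f H r s)
      (powerDensity z₀ f H r s x • toDual ℝ V ((1 / f (z₀ + x)) •
        tangentProj x (gradient f (z₀ + x)) + (r / H x) • gradient H x +
          (2 * s / ‖gradient H x‖ ^ 2) • hess H x (gradient H x))) x := by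
  have hx0 := ne_zero_of_norm_eq_one hx
  have hxn := NormedSpace.normalize_eq_self_of_norm_eq_one hx
  have hgrad0 : 0 < ‖gradient H x‖ := hH0.trans_le (hH.le_norm_gradient hx)
  refine (hasFDerivAt_mul_rpow_mul_rpow (hasFDerivAt_comp_add_normalize hf hx0)
    (hH.hasGradientAt hx0).hasFDerivAt (hH.hasFDerivAt_gradient hx0).norm_sq
    (by rwa [hxn]) hH0 (by positivity)).congr_fderiv ?_
  ext w
  simp only [hxn, hx, inv_one, one_smul, add_apply, smul_apply, smul_eq_mul, map_add, map_smul,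
    toDual_apply_apply, ContinuousLinearMap.comp_apply, innerSL_apply_apply, powerDensity,
    nsmul_eq_mul, Nat.cast_ofNat, hH.hess_symm hx0 (gradient H x), real_inner_comm (gradient H x)]
  ring

lemma abs_fderiv_powerDensity_le (hf : Differentiable ℝ f) (hH : IsHomogeneousC3 H) (hx : ‖x‖ = 1)
    (hm₁ : 0 < m₁) (hfm : m₁ ≤ f (z₀ + x)) (hfK : ‖tangentProj x (gradient f (z₀ + x))‖ ≤ K₁)
    (hm₂ : 0 < m₂) (hHm : m₂ ≤ H x) (hK : ‖gradient H x‖ ≤ K) (w : V) :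
    |fderiv ℝ (powerDensity z₀ f H r s) x w| ≤ powerDensity z₀ f H r s x *
      ((K₁ / m₁ + |r| * K / m₂ + |2 * s| / m₂) * (‖w‖ + ‖hess H x w‖)) := by
  have hf0 : 0 < f (z₀ + x) := hm₁.trans_le hfm
  have hH0 : 0 < H x := hm₂.trans_le hHm
  have hK₁ : 0 ≤ K₁ := (norm_nonneg _).trans hfK
  have hK0 : 0 ≤ K := (norm_nonneg _).trans hK
  have hgrad : m₂ ≤ ‖gradient H x‖ := hHm.trans (hH.le_norm_gradient hx)
  have hgrad0 : 0 < ‖gradient H x‖ := hm₂.trans_le hgrad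
  have hψ : 0 ≤ powerDensity z₀ f H r s x := by
    rw [powerDensity, NormedSpace.normalize_eq_self_of_norm_eq_one hx]
    positivity
  have hfirst := abs_div_mul_inner_le 1 w hm₁ hfm hfK
  have hsecond := abs_div_mul_inner_le r w hm₂ hHm hK
  have hthird := abs_div_mul_inner_le (2 * s) (hess H x w) hm₂ hgrad
    (NormedSpace.norm_normalize_eq_one_iff.2 (norm_pos_iff.1 hgrad0)).le
  have hnormalize : 2 * s / ‖gradient H x‖ *
      ⟪NormedSpace.normalize (gradient H x), hess H x w⟫ =
      2 * s / ‖gradient H x‖ ^ 2 * ⟪hess H x (gradient H x), w⟫ := by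
    rw [hH.hess_symm (ne_zero_of_norm_eq_one hx), real_inner_comm, NormedSpace.normalize,
      real_inner_smul_right]
    field_simp
  rw [hnormalize, mul_one] at hthird
  rw [abs_one, one_mul] at hfirst
  rw [(hasFDerivAt_powerDensity hf hH hx hf0.ne' hH0).fderiv, smul_apply, smul_eq_mul, abs_mul,
    abs_of_nonneg hψ, toDual_apply_apply, inner_add_left, inner_add_left, real_inner_smul_left,
    real_inner_smul_left, real_inner_smul_left]
  gcongr
  have hcross₁ : 0 ≤ (K₁ / m₁ + |r| * K / m₂) * ‖hess H x w‖ := by positivity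
  have hcross₂ : 0 ≤ |2 * s| / m₂ * ‖w‖ := by positivity
  linarith [abs_add_three (1 / f (z₀ + x) * ⟪tangentProj x (gradient f (z₀ + x)), w⟫)
    (r / H x * ⟪gradient H x, w⟫) (2 * s / ‖gradient H x‖ ^ 2 * ⟪hess H x (gradient H x), w⟫)]

lemma powerDensity_le (hH : IsHomogeneousC3 H) (hx : ‖x‖ = 1) (hf : 0 ≤ f (z₀ + x))
    (hfK : f (z₀ + x) ≤ K₁) (hm₂ : 0 < m₂) (hHm : m₂ ≤ H x) (hHK : H x ≤ K₂)
    (hK : ‖gradient H x‖ ≤ K) :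
    powerDensity z₀ f H r s x ≤
      K₁ * (m₂ ^ r + K₂ ^ r) * ((m₂ ^ 2) ^ s + (K ^ 2) ^ s) := by
  have hgrad : m₂ ≤ ‖gradient H x‖ := hHm.trans (hH.le_norm_gradient hx)
  have hH0 : 0 ≤ H x := hm₂.le.trans hHm
  have hpow := rpow_le_rpow_add_rpow hm₂ hHm hHK r
  have hK₁ : 0 ≤ K₁ := hf.trans hfK
  rw [powerDensity, NormedSpace.normalize_eq_self_of_norm_eq_one hx]
  have hsum : 0 ≤ m₂ ^ r + K₂ ^ r := (Real.rpow_nonneg hH0 r).trans hpow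
  gcongr
  exact rpow_le_rpow_add_rpow (by positivity) (by gcongr) (by gcongr) s

lemma isControlledDensity_powerDensity [FiniteDimensional ℝ V] (hf : Differentiable ℝ f)
    (hH : IsHomogeneousC3 H)
    (hm₁ : 0 < m₁) (hfm : ∀ x ∈ unitCap E c, m₁ ≤ f (z₀ + x))
    (hfK : ∀ x ∈ unitCap E c, f (z₀ + x) ≤ K₁)
    (hfK' : ∀ x ∈ unitCap E c, ‖tangentProj x (gradient f (z₀ + x))‖ ≤ K₁)
    (hm₂ : 0 < m₂) (hHm : ∀ x ∈ unitCap E c, m₂ ≤ H x) (hHK : ∀ x ∈ unitCap E c, H x ≤ K₂)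
    (hK : ∀ x ∈ unitCap E c, ‖gradient H x‖ ≤ K)
    (hdet : ∀ x ∈ unitCap E c, (radiiOp H x).det = powerDensity z₀ f H r s x) :
    IsControlledDensity E c H (K₁ / m₁ + |r| * K / m₂ + |2 * s| / m₂)
      (K₁ * (m₂ ^ r + K₂ ^ r) * ((m₂ ^ 2) ^ s + (K ^ 2) ^ s)) (powerDensity z₀ f H r s) where
  det_radiiOp := hdet
  le x hx := powerDensity_le hH hx.1 (hm₁.le.trans (hfm x hx)) (hfK x hx) hm₂ (hHm x hx)
    (hHK x hx) (hK x hx)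
  differentiableAt x hx := (hasFDerivAt_powerDensity hf hH hx.1 (hm₁.trans_le (hfm x hx)).ne'
    (hm₂.trans_le (hHm x hx))).differentiableAt
  abs_fderiv_le x hx w _ := abs_fderiv_powerDensity_le hf hH hx.1 hm₁ (hfm x hx) (hfK' x hx) hm₂
    (hHm x hx) (hK x hx) w

end PowerDensity

section Cap

open InnerProductSpace

variable {n : ℕ} {θ p q : ℝ} {f h : Euc n → ℝ} {x : Euc n}

/-- The support function of the capillary hypersurface described by `h` on the cap `C_θ`, as a
one-homogeneous function on the cone over the Gauss image `unitCap (-eVec n) (cos θ)`. -/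
def capSupport (n : ℕ) (θ : ℝ) (h : Euc n → ℝ) : Euc n → ℝ := radialExtension (cos θ • eVec n) h

lemma norm_neg_eVec (n : ℕ) : ‖-eVec n‖ = 1 := by simp [eVec]

lemma sphNormal_add (x : Euc n) : sphNormal n θ (cos θ • eVec n + x) = x := add_sub_cancel_left _ _

lemma apply_last_smul_eVec_add (x : Euc n) :
    (cos θ • eVec n + x) (Fin.last n) = ⟪-eVec n, x⟫ - cos θ := by
  simp only [eVec, smul_neg, PiLp.add_apply, PiLp.neg_apply, PiLp.smul_apply, PiLp.single_eq_same,
    smul_eq_mul, mul_one, neg_neg, EuclideanSpace.inner_single_left, ringHom_apply, one_mul]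
  ring

lemma add_mem_cap_iff : cos θ • eVec n + x ∈ cap n θ ↔ x ∈ unitCap (-eVec n) (cos θ) := by
  rw [cap, mem_ofPred_eq, apply_last_smul_eVec_add, sphNormal_add, sub_nonneg, and_comm, unitCap,
    mem_ofPred_eq]

lemma add_mem_capBdry_iff :
    cos θ • eVec n + x ∈ capBdry n θ ↔ ‖x‖ = 1 ∧ ⟪-eVec n, x⟫ = cos θ := by
  rw [capBdry, mem_ofPred_eq, apply_last_smul_eVec_add, sphNormal_add, sub_eq_zero, and_comm]

lemma tproj_add (x : Euc n) : tproj n θ (cos θ • eVec n + x) = tangentProj x := by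
  ext1 w
  simp [tproj, sphNormal_add, tangentProj_apply]

lemma sgrad_add (h : Euc n → ℝ) (x : Euc n) :
    sgrad n θ h (cos θ • eVec n + x) = tangentProj x (gradient h (cos θ • eVec n + x)) := by
  rw [sgrad, tproj_add]

lemma capSupport_of_norm_eq_one (h : Euc n → ℝ) (hx : ‖x‖ = 1) :
    capSupport n θ h x = h (cos θ • eVec n + x) :=
  radialExtension_of_norm_eq_one _ h hx

lemma hessOp_add (hh : ContDiff ℝ 2 h) (hx : ‖x‖ = 1) :
    hessOp n θ h (cos θ • eVec n + x) = radiiOp (capSupport n θ h) x := by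
  have hnormal : normalPart n θ (cos θ • eVec n + x) = rankOne ℝ x x := by
    ext1 w
    simp [normalPart, sphNormal_add]
  rw [hessOp, thessOp, tproj_add, sphNormal_add, hnormal, radiiOp, capSupport,
    hess_radialExtension hh hx, hess]
  module

lemma inner_hess_capSupport (hh : ContDiff ℝ 2 h) (hx : ‖x‖ = 1) {v w : Euc n}
    (hv : ⟪x, v⟫ = 0) (hw : ⟪x, w⟫ = 0) :
    ⟪hess (capSupport n θ h) x v, w⟫ =
      shess n θ h (cos θ • eVec n + x) v w + h (cos θ • eVec n + x) * ⟪v, w⟫ := by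
  rw [capSupport, inner_hess_radialExtension hh hx hv hw, shess, sphNormal_add, hess]

lemma eqRHS_add (hh : Differentiable ℝ h) (hx : ‖x‖ = 1) :
    eqRHS n θ p q f h (cos θ • eVec n + x) =
      powerDensity (cos θ • eVec n) f (capSupport n θ h) (p - 1) ((n + 1 - q) / 2) x := by
  rw [eqRHS, powerDensity, NormedSpace.normalize_eq_self_of_norm_eq_one hx,
    capSupport_of_norm_eq_one h hx, capSupport, norm_sq_gradient_radialExtension hh hx, sgrad_add]

lemma tangentProj_neg_eVec (hsin : sin θ ≠ 0) (hx : ⟪-eVec n, x⟫ = cos θ) :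
    tangentProj x (-eVec n) = -(sin θ • conormal n θ (cos θ • eVec n + x)) := by
  rw [tangentProj_apply, real_inner_comm, hx, conormal, Real.cot_eq_cos_div_sin]
  match_scalars
  · field_simp
    linear_combination Real.sin_sq_add_cos_sq θ
  · field_simp

lemma inner_gradient_capSupport_eq_zero (hsin : sin θ ≠ 0) (hh : Differentiable ℝ h)
    (hR : RobinBC n θ h) (hx : ‖x‖ = 1) (hxθ : ⟪-eVec n, x⟫ = cos θ) :
    ⟪-eVec n, gradient (capSupport n θ h) x⟫ = 0 := by
  have hRobin := hR _ (add_mem_capBdry_iff.2 ⟨hx, hxθ⟩)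
  rw [sgrad_add, Real.cot_eq_cos_div_sin] at hRobin
  have htangent : ⟪-eVec n, tangentProj x (gradient h (cos θ • eVec n + x))⟫ =
      -(cos θ * h (cos θ • eVec n + x)) := by
    rw [← tangentProj_eq_self (inner_tangentProj_self hx (gradient h _)), inner_tangentProj_right,
      tangentProj_neg_eVec hsin hxθ, inner_neg_left, real_inner_smul_left, real_inner_comm, hRobin]
    field_simp
  rw [capSupport, gradient_radialExtension hh (ne_zero_of_norm_eq_one hx),
    NormedSpace.normalize_eq_self_of_norm_eq_one hx, inner_add_right, real_inner_smul_right, hxθ,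
    htangent]
  ring

lemma isCapillarySupport_capSupport (hsin : sin θ ≠ 0) (hh : ContDiff ℝ 3 h)
    (hconv : IsConvexSol n θ h) (hR : RobinBC n θ h) :
    IsCapillarySupport (-eVec n) (cos θ) (capSupport n θ h) where
  toIsHomogeneousC3 := isHomogeneousC3_radialExtension _ hh
  inner_hess_pos x hx w hxw hw := by
    rw [inner_hess_capSupport (hh.of_le (by norm_num)) hx.1 hxw hxw]
    exact hconv _ (add_mem_cap_iff.2 hx) w (by rwa [IsTangent, sphNormal_add, real_inner_comm]) hw
  inner_gradient_eq_zero x hx hxθ :=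
    inner_gradient_capSupport_eq_zero hsin (hh.differentiable (by norm_num)) hR hx hxθ

lemma norm_gradient_capSupport_le (hsin : 0 < sin θ) (hcos : 0 < cos θ) {K : ℝ}
    (hh : ContDiff ℝ 3 h) (hhK : CZeroNormLe n θ h K) (hconv : IsConvexSol n θ h)
    (hR : RobinBC n θ h) (hx : x ∈ unitCap (-eVec n) (cos θ)) :
    ‖gradient (capSupport n θ h) x‖ ≤ K / sin θ := by
  have hle := (isCapillarySupport_capSupport hsin.ne' hh hconv hR).norm_gradient_mul_le
    (norm_neg_eVec n) hcos (K := K) (fun z hz => by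
      rw [capSupport_of_norm_eq_one h hz.1]
      exact hhK _ (add_mem_cap_iff.2 hz)) hx
  rwa [← Real.abs_sin_eq_sqrt_one_sub_cos_sq, abs_of_pos hsin, ← le_div_iff₀ hsin] at hle

lemma isControlledDensity_capSupport {m₁ m₂ K₁ K₂ K : ℝ} (hm₁ : 0 < m₁) (hm₂ : 0 < m₂)
    (hf : Differentiable ℝ f) (hfm : ∀ ξ ∈ cap n θ, m₁ ≤ f ξ) (hfK : COneNormLe n θ f K₁)
    (hh : ContDiff ℝ 3 h) (hhm : ∀ ξ ∈ cap n θ, m₂ ≤ h ξ) (hhK : CZeroNormLe n θ h K₂)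
    (hK : ∀ x ∈ unitCap (-eVec n) (cos θ), ‖gradient (capSupport n θ h) x‖ ≤ K)
    (hsolves : SolvesEq n θ p q f h) :
    IsControlledDensity (-eVec n) (cos θ) (capSupport n θ h)
      (K₁ / m₁ + |p - 1| * K / m₂ + |2 * ((n + 1 - q) / 2)| / m₂)
      (K₁ * (m₂ ^ (p - 1) + K₂ ^ (p - 1)) *
        ((m₂ ^ 2) ^ ((n + 1 - q) / 2) + (K ^ 2) ^ ((n + 1 - q) / 2)))
      (powerDensity (cos θ • eVec n) f (capSupport n θ h) (p - 1) ((n + 1 - q) / 2)) := by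
  refine isControlledDensity_powerDensity hf (isHomogeneousC3_radialExtension _ hh) hm₁
    (fun x hx => hfm _ (add_mem_cap_iff.2 hx))
    (fun x hx => (le_abs_self _).trans (hfK.1 _ (add_mem_cap_iff.2 hx)))
    (fun x hx => sgrad_add f x ▸ hfK.2 _ (add_mem_cap_iff.2 hx)) hm₂ (fun x hx => ?_)
    (fun x hx => ?_) hK (fun x hx => ?_)
  · rw [capSupport_of_norm_eq_one h hx.1]
    exact hhm _ (add_mem_cap_iff.2 hx)
  · rw [capSupport_of_norm_eq_one h hx.1]
    exact (le_abs_self _).trans (hhK _ (add_mem_cap_iff.2 hx))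
  · rw [← hessOp_add (hh.of_le (by norm_num)) hx.1,
      ← eqRHS_add (hh.differentiable (by norm_num)) hx.1]
    exact hsolves _ (add_mem_cap_iff.2 hx)

lemma inner_hess_capSupport_eVec (hsin : sin θ ≠ 0) (hh : ContDiff ℝ 3 h) (hx : ‖x‖ = 1)
    (hxθ : ⟪-eVec n, x⟫ = cos θ) :
    ⟪hess (capSupport n θ h) x (-eVec n), -eVec n⟫ =
      (shess n θ h (cos θ • eVec n + x) (conormal n θ (cos θ • eVec n + x))
        (conormal n θ (cos θ • eVec n + x)) + h (cos θ • eVec n + x)) * (1 - cos θ ^ 2) := by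
  have hH : IsHomogeneousC3 (capSupport n θ h) := isHomogeneousC3_radialExtension _ hh
  have htangent := inner_tangentProj_self hx (-eVec n)
  have hnorm : ‖tangentProj x (-eVec n)‖ ^ 2 = 1 - cos θ ^ 2 := by
    rw [norm_sq_tangentProj hx, norm_neg_eVec, real_inner_comm, hxθ, one_pow]
  have hshess : shess n θ h (cos θ • eVec n + x) (tangentProj x (-eVec n))
      (tangentProj x (-eVec n)) = (1 - cos θ ^ 2) * shess n θ h (cos θ • eVec n + x)
        (conormal n θ (cos θ • eVec n + x)) (conormal n θ (cos θ • eVec n + x)) := by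
    simp only [tangentProj_neg_eVec hsin hxθ, shess, map_neg, map_smul, inner_neg_neg,
      real_inner_smul_left, real_inner_smul_right]
    rw [← Real.sin_sq]
    ring
  rw [← hH.inner_hess_tangentProj (ne_zero_of_norm_eq_one hx),
    inner_hess_capSupport (hh.of_le (by norm_num)) hx htangent htangent,
    real_inner_self_eq_norm_sq, hnorm, hshess]
  ring

lemma abs_shess_conormal_le (hsin : sin θ ≠ 0) (hh : ContDiff ℝ 3 h) (hx : ‖x‖ = 1)
    (hxθ : ⟪-eVec n, x⟫ = cos θ) {a : ℝ}
    (ha : |⟪hess (capSupport n θ h) x (-eVec n), -eVec n⟫| ≤ a * (1 - cos θ ^ 2)) :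
    |shess n θ h (cos θ • eVec n + x) (conormal n θ (cos θ • eVec n + x))
        (conormal n θ (cos θ • eVec n + x))| ≤ a + |h (cos θ • eVec n + x)| := by
  have hsin_sq : 0 < 1 - cos θ ^ 2 := by
    rw [← Real.sin_sq]
    positivity
  rw [inner_hess_capSupport_eVec hsin hh hx hxθ, abs_mul, abs_of_pos hsin_sq] at ha
  have hsum := le_of_mul_le_mul_right ha hsin_sq
  simpa using (abs_sub _ (h (cos θ • eVec n + x))).trans (add_le_add_left hsum _)

end Cap

theorem double_normal_boundary_estimate_general (n : ℕ) (θ p q : ℝ) (hθ : θ ∈ Ioo 0 (π / 2))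
    (m₁ m₂ K₁ K₂ : ℝ) (hm₁ : 0 < m₁) (hm₂ : 0 < m₂) :
    ∃ C : ℝ, 0 < C ∧
      ∀ f h : Euc n → ℝ,
        ContDiff ℝ 1 f → (∀ ξ ∈ cap n θ, m₁ ≤ f ξ) → COneNormLe n θ f K₁ →
        ContDiff ℝ 3 h → (∀ ξ ∈ cap n θ, m₂ ≤ h ξ) → CZeroNormLe n θ h K₂ →
        IsConvexSol n θ h → SolvesEq n θ p q f h → RobinBC n θ h →
        ∀ ξ ∈ capBdry n θ,
          |shess n θ h ξ (conormal n θ ξ) (conormal n θ ξ)| ≤ C := by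
  have hsin : 0 < sin θ := Real.sin_pos_of_pos_of_lt_pi hθ.1 (by linarith [hθ.2, Real.pi_pos])
  have hcos : 0 < cos θ := Real.cos_pos_of_mem_Ioo ⟨by linarith [hθ.1, Real.pi_pos], hθ.2⟩
  have hcos1 : cos θ < 1 := by nlinarith [Real.sin_sq_add_cos_sq θ]
  set Λ := |K₁| / m₁ + |p - 1| * (|K₂| / sin θ) / m₂ + |2 * ((n + 1 - q) / 2)| / m₂
  have hΛ : 0 ≤ Λ := by positivity
  obtain ⟨a, ha, hbound⟩ := exists_forall_abs_inner_hess_le (norm_neg_eVec n) hcos hcos1 hΛ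
    (|K₁| * (m₂ ^ (p - 1) + |K₂| ^ (p - 1)) *
      ((m₂ ^ 2) ^ ((n + 1 - q) / 2) + ((|K₂| / sin θ) ^ 2) ^ ((n + 1 - q) / 2))) (|K₂| / sin θ)
  refine ⟨a + |K₂|, by positivity, fun f h hf hfm hfK hh hhm hhK hconv hsolves hR ξ hξ => ?_⟩
  obtain ⟨x, rfl⟩ : ∃ x, cos θ • eVec n + x = ξ := ⟨ξ - cos θ • eVec n, add_sub_cancel _ _⟩
  obtain ⟨hx, hxθ⟩ := add_mem_capBdry_iff.1 hξ
  have hfK' : COneNormLe n θ f |K₁| :=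
    ⟨fun ξ hξ => (hfK.1 ξ hξ).trans (le_abs_self K₁),
      fun ξ hξ => (hfK.2 ξ hξ).trans (le_abs_self K₁)⟩
  have hhK' : CZeroNormLe n θ h |K₂| := fun ξ hξ => (hhK ξ hξ).trans (le_abs_self K₂)
  have hgrad := fun z hz => norm_gradient_capSupport_le hsin hcos hh hhK' hconv hR (x := z) hz
  have hdouble := hbound _ _ (isCapillarySupport_capSupport hsin.ne' hh hconv hR)
    (isControlledDensity_capSupport hm₁ hm₂ (hf.differentiable one_ne_zero) hfm hfK' hh hhm hhK'
      hgrad hsolves) hgrad x hx hxθ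
  exact (abs_shess_conormal_le hsin.ne' hh hx hxθ hdouble).trans
    (add_le_add_right (hhK' _ (add_mem_cap_iff.2 ⟨hx, hxθ.ge⟩)) a)

/-- Lemma 4.1, Step 2: boundary double normal estimate
`sup_{∂C_θ} |∇²h(μ,μ)| ≤ C`, with `C` depending only on `n`, `p`, `q`, lower bounds for
`f` and `h`, `‖f‖_{C²(C_θ)}` and `‖h‖_{C⁰(C_θ)}`. -/
theorem double_normal_boundary_estimate
    (n : ℕ) (hn : 1 ≤ n) (θ p q : ℝ) (hθ : θ ∈ Set.Ioo 0 (π / 2)) (hpq : q < p)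
    (m₁ m₂ K₁ K₂ : ℝ) (hm₁ : 0 < m₁) (hm₂ : 0 < m₂) :
    ∃ C : ℝ, 0 < C ∧
      ∀ f h : Euc n → ℝ,
        ContDiff ℝ (⊤ : ℕ∞) f → (∀ ξ ∈ cap n θ, 0 < f ξ) →
        (∀ ξ ∈ cap n θ, m₁ ≤ f ξ) → CTwoNormLe n θ f K₁ →
        ContDiff ℝ (⊤ : ℕ∞) h → PosOnCap n θ h →
        (∀ ξ ∈ cap n θ, m₂ ≤ h ξ) → CZeroNormLe n θ h K₂ →
        IsConvexSol n θ h → SolvesEq n θ p q f h → RobinBC n θ h →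
        ∀ ξ ∈ capBdry n θ,
          |shess n θ h ξ (conormal n θ ξ) (conormal n θ ξ)| ≤ C := by
  obtain ⟨C, hC, hbound⟩ := double_normal_boundary_estimate_general n θ p q hθ m₁ m₂ K₁ K₂ hm₁ hm₂
  exact ⟨C, hC, fun f h hf _ hfm hfK hh _ => hbound f h (mod_cast contDiff_infty.1 hf 1) hfm hfK.1
    (mod_cast contDiff_infty.1 hh 3)⟩
end
end

section
/- Let p > q and θ ∈ (0, π/2), and let f > 0 be smooth on C_θ. If h¹, h² ∈ C^{2,α}(C_θ) are both positive convex solutions of det(∇²h + hσ) = f·h^{p-1}(h² + |∇h|²)^{(n+1-q)/2} in C_θ with ∇_μ h = cot θ · h on ∂C_θ, then h¹ ≡ h² on C_θ. -/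
/- Formalization of statements from "The L_p dual Minkowski problem for capillary
hypersurfaces".

We work in the ambient space `ℝ^{n+1}`.  The spherical cap `C_θ` is the part of the unit
sphere centred at `cos θ • e` (where `e = -E_{n+1}`) lying in the closed upper half-space.
Functions on `C_θ` are represented by ambient functions `h : Euc n → ℝ`; the intrinsic
(round-metric) gradient `∇h` and Hessian `∇²h` of the restriction of `h` to `C_θ` are
expressed through ambient derivatives (for tangential arguments these expressions depend
only on the restriction of `h` to the cap).  The quantity `det(∇²h + hσ)` is encoded as the
determinant of the endomorphism of `ℝ^{n+1}` acting as `∇²h + hσ` on the tangent space of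
the cap and as the identity on the normal line. -/

open Real Set
open scoped RealInnerProductSpace

noncomputable section

/-!
Let `c` be the maximum of `h₁ / h₂` on the cap, attained at `ξ`, so that `c h₂` touches `h₁` from
above at `ξ`. There `∇h₁ = c ∇h₂` and `∇²h₁ ≤ c ∇²h₂`, also when `ξ` is a boundary point: the Robin
condition makes `∇_μ (h₁ - c h₂)` vanish, and the curves issuing from `ξ` into the cap then see
enough directions. Determinants are monotone on positive semidefinite forms, so comparing the
equations for `h₁` and `h₂` at `ξ`, whose left-hand sides scale with degree `n` and right-hand sides
with degree `n + p - q > n`, gives `c ^ (n + p - q) ≤ c ^ n`. Hence `c ≤ 1`, that is `h₁ ≤ h₂`, and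
the claim follows by exchanging the two solutions.
-/

section Determinant

variable {𝕜 : Type*} [RCLike 𝕜]

open scoped ComplexOrder MatrixOrder

theorem one_le_det_one_add {m : Type*} [Fintype m] [DecidableEq m] {P : Matrix m m 𝕜}
    (hP : P.PosSemidef) : 1 ≤ (1 + P).det := by
  -- `det (1 + P)` is, up to sign, the characteristic polynomial of `P` at `-1`.
  have hdet : (1 + P).det = ((∏ i, (1 + hP.isHermitian.eigenvalues i) : ℝ) : 𝕜) := by
    rw [← neg_neg (1 + P), Matrix.det_neg, neg_add', ← map_one (Matrix.scalar m), ← map_neg,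
      ← Matrix.eval_charpoly, hP.isHermitian.charpoly_eq, Polynomial.eval_prod, ← Finset.card_univ,
      ← Finset.prod_const, ← Finset.prod_mul_distrib]
    simp [add_comm]
  rw [hdet]
  exact_mod_cast Finset.one_le_prod fun i _ =>
    le_add_of_nonneg_right (hP.eigenvalues_nonneg i)

theorem det_le_det_add {m : Type*} [Fintype m] [DecidableEq m] {A C : Matrix m m 𝕜}
    (hA : A.PosSemidef) (hC : C.PosSemidef) : A.det ≤ (A + C).det := by
  by_cases hdet : A.det = 0
  · exact hdet ▸ (hA.add hC).det_nonneg
  have hApos : A.PosDef := hA.posDef_iff_det_ne_zero.2 hdet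
  obtain ⟨B, rfl⟩ := CStarAlgebra.nonneg_iff_eq_star_mul_self.mp hC.nonneg
  rw [Matrix.star_eq_conjTranspose, Matrix.det_add_mul _ _ (Ne.isUnit hdet)]
  exact le_mul_of_one_le_right hApos.det_pos.le
    (one_le_det_one_add (hApos.inv.posSemidef.mul_mul_conjTranspose_same B))

theorem det_le_det_of_le {E : Type*} [NormedAddCommGroup E] [InnerProductSpace 𝕜 E]
    [FiniteDimensional 𝕜 E] {A B : E →ₗ[𝕜] E} (hA : 0 ≤ A) (hAB : A ≤ B) :
    LinearMap.det A ≤ LinearMap.det B := by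
  let b := stdOrthonormalBasis 𝕜 E
  have hA' := (LinearMap.posSemidef_toMatrix_iff b).2 ((LinearMap.nonneg_iff_isPositive A).1 hA)
  have hBA := (LinearMap.posSemidef_toMatrix_iff b).2 ((LinearMap.le_def A B).1 hAB)
  simpa only [← map_add, add_sub_cancel, LinearMap.det_toMatrix] using det_le_det_add hA' hBA

end Determinant

section OneSidedDerivative

open Filter Topology

variable {g g' : ℝ → ℝ} {a d : ℝ}

theorem eventually_nhdsGT_lt_of_hasDerivAt_pos (hg : HasDerivAt g d a) (hd : 0 < d) :
    ∀ᶠ t in 𝓝[>] a, g a < g t := by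
  filter_upwards [(hasDerivAt_iff_tendsto_slope_left_right.1 hg).2.eventually_const_lt hd,
    self_mem_nhdsWithin] with t ht hat
  exact (slope_pos_iff_of_le (le_of_lt hat)).1 ht

theorem hasDerivAt_nonpos_of_eventually_nhdsGT_le (hg : HasDerivAt g d a)
    (hle : ∀ᶠ t in 𝓝[>] a, g t ≤ g a) : d ≤ 0 := by
  by_contra! hd
  obtain ⟨t, hlt, hle⟩ := ((eventually_nhdsGT_lt_of_hasDerivAt_pos hg hd).and hle).exists
  exact hlt.not_ge hle

theorem second_hasDerivAt_nonpos_of_eventually_nhdsGT_le (hg : ∀ t, HasDerivAt g (g' t) t)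
    (hg' : HasDerivAt g' d a) (hcrit : g' a = 0) (hle : ∀ᶠ t in 𝓝[>] a, g t ≤ g a) : d ≤ 0 := by
  by_contra! hd
  have hpos := eventually_nhdsGT_lt_of_hasDerivAt_pos hg' hd
  rw [hcrit] at hpos
  obtain ⟨b, hab, hb⟩ := mem_nhdsGT_iff_exists_Ioc_subset.1 (hpos.and hle)
  have hmono : StrictMonoOn g (Icc a b) := by
    refine strictMonoOn_of_deriv_pos (convex_Icc a b)
      (fun t _ => (hg t).continuousAt.continuousWithinAt) fun t ht => ?_
    rw [interior_Icc] at ht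
    exact (hg t).deriv ▸ (hb (Ioo_subset_Ioc_self ht)).1
  have hab' : a < b := hab
  exact (hmono (left_mem_Icc.2 hab'.le) (right_mem_Icc.2 hab'.le) hab').not_ge (hb ⟨hab', le_rfl⟩).2

end OneSidedDerivative

section Gradient

variable {E : Type*} [NormedAddCommGroup E] [InnerProductSpace ℝ E] [CompleteSpace E]

theorem contDiff_gradient {m n : WithTop ℕ∞} {h : E → ℝ} (hh : ContDiff ℝ n h) (hmn : m + 1 ≤ n) :
    ContDiff ℝ m (gradient h) :=
  (InnerProductSpace.toDual ℝ E).symm.toContinuousLinearEquiv.contDiff.comp (hh.fderiv_right hmn)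

theorem differentiable_gradient {h : E → ℝ} (hh : ContDiff ℝ 2 h) :
    Differentiable ℝ (gradient h) :=
  (contDiff_gradient hh one_add_one_eq_two.le).differentiable one_ne_zero

theorem inner_fderiv_gradient_comm {h : E → ℝ} (hh : ContDiff ℝ 2 h) (x u v : E) :
    ⟪fderiv ℝ (gradient h) x u, v⟫ = ⟪fderiv ℝ (gradient h) x v, u⟫ := by
  have hinner : ∀ y z : E, ⟪fderiv ℝ (gradient h) x y, z⟫ = fderiv ℝ (fderiv ℝ h) x y z := by
    intro y z
    rw [show gradient h = (InnerProductSpace.toDual ℝ E).symm ∘ fderiv ℝ h from rfl,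
      LinearIsometryEquiv.comp_fderiv]
    exact InnerProductSpace.toDual_symm_apply
  rw [hinner, hinner]
  exact (hh.contDiffAt.isSymmSndFDerivAt (by simp)) u v

theorem gradient_sub {h k : E → ℝ} {x : E} (hh : DifferentiableAt ℝ h x)
    (hk : DifferentiableAt ℝ k x) : gradient (h - k) x = gradient h x - gradient k x := by
  simp only [gradient, fderiv_sub hh hk, map_sub]

theorem gradient_const_smul (c : ℝ) (h : E → ℝ) : gradient (c • h) = c • gradient h := by
  ext1 x
  simp [gradient, fderiv_const_smul_field]

end Gradient

section GreatCircle

variable {E : Type*} [NormedAddCommGroup E] [InnerProductSpace ℝ E]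

/-- The curve `t ↦ cos t • u + sin t • v`: for orthonormal `u` and `v`, the unit speed geodesic of
the unit sphere issuing from `u` with velocity `v`. -/
def greatCircle (u v : E) (t : ℝ) : E := Real.cos t • u + Real.sin t • v

@[simp]
theorem greatCircle_zero (u v : E) : greatCircle u v 0 = u := by
  simp [greatCircle]

theorem hasDerivAt_greatCircle (u v : E) (t : ℝ) :
    HasDerivAt (greatCircle u v) (greatCircle v (-u) t) t := by
  have h := ((Real.hasDerivAt_cos t).smul_const u).add ((Real.hasDerivAt_sin t).smul_const v)
  exact h.congr_deriv (by simp [greatCircle, add_comm])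

theorem norm_greatCircle {u v : E} (hu : ‖u‖ = 1) (hv : ‖v‖ = 1) (huv : ⟪u, v⟫ = 0) (t : ℝ) :
    ‖greatCircle u v t‖ = 1 := by
  rw [← pow_eq_one_iff_of_nonneg (norm_nonneg _) two_ne_zero, greatCircle, norm_add_sq_real,
    norm_smul, norm_smul, hu, hv, real_inner_smul_left, real_inner_smul_right, huv]
  simp

end GreatCircle

section Cap

open Filter Topology

variable {n : ℕ} {θ : ℝ} {ξ X Y : Euc n}

theorem isCompact_cap (n : ℕ) (θ : ℝ) : IsCompact (cap n θ) := by
  have hν : Continuous (sphNormal n θ) := by unfold sphNormal; fun_prop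
  have hlast : Continuous fun ξ : Euc n => ξ (Fin.last n) := by fun_prop
  refine Metric.isCompact_of_isClosed_isBounded
    ((isClosed_le continuous_const hlast).inter (isClosed_eq hν.norm continuous_const))
    ((Metric.isBounded_closedBall (x := Real.cos θ • eVec n) (r := 1)).subset fun ξ hξ => ?_)
  exact mem_closedBall_iff_norm.2 hξ.2.le

theorem inner_eVec (x : Euc n) : ⟪x, eVec n⟫ = -x (Fin.last n) := by
  simp [eVec, EuclideanSpace.inner_single_right]

theorem IsTangent.add (hX : IsTangent n θ ξ X) (hY : IsTangent n θ ξ Y) :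
    IsTangent n θ ξ (X + Y) := by
  rw [IsTangent, inner_add_left, hX, hY, add_zero]

theorem IsTangent.smul (hX : IsTangent n θ ξ X) (c : ℝ) : IsTangent n θ ξ (c • X) := by
  rw [IsTangent, real_inner_smul_left, hX, mul_zero]

theorem tproj_apply (n : ℕ) (θ : ℝ) (ξ x : Euc n) :
    tproj n θ ξ x = x - ⟪sphNormal n θ ξ, x⟫ • sphNormal n θ ξ :=
  rfl

theorem inner_tproj_left (n : ℕ) (θ : ℝ) (ξ x y : Euc n) :
    ⟪tproj n θ ξ x, y⟫ = ⟪x, tproj n θ ξ y⟫ := by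
  rw [tproj_apply, tproj_apply, inner_sub_left, inner_sub_right, real_inner_smul_left,
    real_inner_smul_right, real_inner_comm x]
  ring

theorem tproj_sphNormal (hν : ‖sphNormal n θ ξ‖ = 1) : tproj n θ ξ (sphNormal n θ ξ) = 0 := by
  rw [tproj_apply, real_inner_self_eq_norm_sq, hν, one_pow, one_smul, sub_self]

theorem isTangent_tproj (hν : ‖sphNormal n θ ξ‖ = 1) (x : Euc n) :
    IsTangent n θ ξ (tproj n θ ξ x) := by
  rw [IsTangent, inner_tproj_left, tproj_sphNormal hν, inner_zero_right]

theorem IsTangent.tproj_eq (hX : IsTangent n θ ξ X) : tproj n θ ξ X = X := by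
  rw [tproj_apply, real_inner_comm, hX, zero_smul, sub_zero]

theorem IsTangent.inner_sgrad (hX : IsTangent n θ ξ X) (h : Euc n → ℝ) :
    ⟪sgrad n θ h ξ, X⟫ = ⟪gradient h ξ, X⟫ := by
  rw [sgrad, inner_tproj_left, hX.tproj_eq]

theorem inner_self_of_mem_capBdry (hξ : ξ ∈ capBdry n θ) : ⟪ξ, ξ⟫ = Real.sin θ ^ 2 := by
  have hnorm : ‖ξ - Real.cos θ • eVec n‖ ^ 2 = 1 := by rw [← sphNormal, hξ.2, one_pow]
  have he : ‖eVec n‖ = 1 := by simp [eVec]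
  rw [norm_sub_sq_real, real_inner_smul_right, inner_eVec, hξ.1, norm_smul, he, mul_one,
    Real.norm_eq_abs, sq_abs] at hnorm
  rw [real_inner_self_eq_norm_sq, Real.sin_sq]
  linarith

theorem isTangent_conormal (hθ : Real.sin θ ≠ 0) (hξ : ξ ∈ capBdry n θ) :
    IsTangent n θ ξ (conormal n θ ξ) := by
  have he : ⟪eVec n, eVec n⟫ = (1 : ℝ) := by simp [eVec]
  have hξe : ⟪ξ, eVec n⟫ = 0 := by rw [inner_eVec, hξ.1, neg_zero]
  simp only [IsTangent, conormal, sphNormal, inner_add_left, inner_sub_right,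
    real_inner_smul_left, real_inner_smul_right, he, hξe, (real_inner_comm _ _).trans hξe,
    inner_self_of_mem_capBdry hξ, Real.cot_eq_cos_div_sin]
  field_simp
  ring

theorem conormal_last (hξ : ξ ∈ capBdry n θ) : conormal n θ ξ (Fin.last n) = -Real.sin θ := by
  simp [conormal, eVec, hξ.1]

/-- `X` points strictly into the upper half-space at a boundary point `ξ` of the cap (no condition
at an interior point): geodesics with such a velocity stay in the cap for a short time. -/
def IsInward (n : ℕ) (ξ X : Euc n) : Prop := 0 < ξ (Fin.last n) ∨ 0 < X (Fin.last n)

theorem IsInward.smul {c : ℝ} (hX : IsInward n ξ X) (hc : 0 < c) : IsInward n ξ (c • X) :=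
  hX.imp_right fun h => mul_pos hc h

theorem IsInward.exists_add_smul (hY : IsInward n ξ Y) (X : Euc n) :
    ∃ s : ℝ, IsInward n ξ (X + s • Y) := by
  rcases hY with hξ | hY
  · exact ⟨0, Or.inl hξ⟩
  · refine ⟨(1 - X (Fin.last n)) / Y (Fin.last n), Or.inr ?_⟩
    simp [hY.ne']

theorem IsInward.add_smul (hY : IsInward n ξ Y) (hX : 0 ≤ X (Fin.last n)) {s : ℝ} (hs : 0 < s) :
    IsInward n ξ (X + s • Y) :=
  hY.imp_right fun h => add_pos_of_nonneg_of_pos hX (mul_pos hs h)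

/-- For a unit vector `X` tangent to the cap at `ξ`, the unit speed geodesic issuing from `ξ` with
velocity `X` in the sphere containing the cap; functions are tested along it at an extremum. -/
def capGeodesic (n : ℕ) (θ : ℝ) (ξ X : Euc n) (t : ℝ) : Euc n :=
  Real.cos θ • eVec n + greatCircle (sphNormal n θ ξ) X t

@[simp]
theorem capGeodesic_zero (n : ℕ) (θ : ℝ) (ξ X : Euc n) : capGeodesic n θ ξ X 0 = ξ := by
  simp [capGeodesic, sphNormal]

theorem hasDerivAt_capGeodesic (n : ℕ) (θ : ℝ) (ξ X : Euc n) (t : ℝ) :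
    HasDerivAt (capGeodesic n θ ξ X) (greatCircle X (-sphNormal n θ ξ) t) t :=
  (hasDerivAt_greatCircle _ _ t).const_add _

theorem sphNormal_capGeodesic (n : ℕ) (θ : ℝ) (ξ X : Euc n) (t : ℝ) :
    sphNormal n θ (capGeodesic n θ ξ X t) = greatCircle (sphNormal n θ ξ) X t :=
  add_sub_cancel_left _ _

theorem eventually_capGeodesic_last_nonneg (hξ : 0 ≤ ξ (Fin.last n)) (hin : IsInward n ξ X) :
    ∀ᶠ t in 𝓝[>] 0, 0 ≤ capGeodesic n θ ξ X t (Fin.last n) := by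
  have hderiv : HasDerivAt (fun t => capGeodesic n θ ξ X t (Fin.last n)) (X (Fin.last n)) 0 := by
    exact ((EuclideanSpace.proj (𝕜 := ℝ) (Fin.last n)).hasFDerivAt.comp_hasDerivAt 0
      (hasDerivAt_capGeodesic n θ ξ X 0)).congr_deriv (by simp)
  rcases hin with hξ_pos | hX_pos
  · have hpos : 0 < capGeodesic n θ ξ X 0 (Fin.last n) := by simpa using hξ_pos
    exact nhdsWithin_le_nhds ((hderiv.continuousAt.eventually_const_lt hpos).mono fun _ => le_of_lt)
  · filter_upwards [eventually_nhdsGT_lt_of_hasDerivAt_pos hderiv hX_pos] with t ht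
    rw [capGeodesic_zero] at ht
    exact hξ.trans ht.le

theorem tendsto_capGeodesic_nhdsWithin_cap (hξ : ξ ∈ cap n θ) (hX : IsTangent n θ ξ X)
    (hX1 : ‖X‖ = 1) (hin : IsInward n ξ X) :
    Tendsto (capGeodesic n θ ξ X) (𝓝[>] 0) (𝓝[cap n θ] ξ) := by
  refine tendsto_nhdsWithin_iff.2 ⟨?_, ?_⟩
  · have hcont := (hasDerivAt_capGeodesic n θ ξ X 0).continuousAt.tendsto
    rw [capGeodesic_zero] at hcont
    exact hcont.mono_left nhdsWithin_le_nhds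
  · filter_upwards [eventually_capGeodesic_last_nonneg hξ.1 hin] with t ht
    refine ⟨ht, ?_⟩
    rw [sphNormal_capGeodesic, norm_greatCircle hξ.2 hX1 ((real_inner_comm _ _).trans hX)]

theorem exists_eq_smul_unit_isInward (hX : IsTangent n θ ξ X) (hin : IsInward n ξ X)
    (hX0 : X ≠ 0) :
    ∃ Y : Euc n, ‖Y‖ = 1 ∧ IsTangent n θ ξ Y ∧ IsInward n ξ Y ∧ X = ‖X‖ • Y := by
  have hpos : 0 < ‖X‖ := norm_pos_iff.2 hX0
  exact ⟨‖X‖⁻¹ • X, norm_smul_inv_norm hX0, hX.smul _, hin.smul (inv_pos.2 hpos),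
    (smul_inv_smul₀ hpos.ne' X).symm⟩

end Cap

section MaximumPrinciple

open Filter Topology

variable {n : ℕ} {θ : ℝ} {w : Euc n → ℝ} {ξ X : Euc n}

theorem hasDerivAt_comp_capGeodesic (hw : Differentiable ℝ w) (ξ X : Euc n) (t : ℝ) :
    HasDerivAt (fun s => w (capGeodesic n θ ξ X s))
      ⟪gradient w (capGeodesic n θ ξ X t), greatCircle X (-sphNormal n θ ξ) t⟫ t :=
  (hw _).hasGradientAt.hasFDerivAt.comp_hasDerivAt t (hasDerivAt_capGeodesic n θ ξ X t)

theorem hasDerivAt_inner_gradient_capGeodesic (hw : ContDiff ℝ 2 w) (ξ : Euc n) (hX : ‖X‖ = 1) :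
    HasDerivAt (fun t => ⟪gradient w (capGeodesic n θ ξ X t), greatCircle X (-sphNormal n θ ξ) t⟫)
      (shess n θ w ξ X X) 0 := by
  have hgrad := (differentiable_gradient hw _).hasFDerivAt.comp_hasDerivAt 0
    (hasDerivAt_capGeodesic n θ ξ X 0)
  refine (hgrad.inner ℝ (hasDerivAt_greatCircle X (-sphNormal n θ ξ) 0)).congr_deriv ?_
  simp [shess, hX]
  ring

theorem shess_smul (n : ℕ) (θ : ℝ) (w : Euc n → ℝ) (ξ : Euc n) (c : ℝ) (X : Euc n) :
    shess n θ w ξ (c • X) (c • X) = c ^ 2 * shess n θ w ξ X X := by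
  simp only [shess, map_smul, real_inner_smul_left, real_inner_smul_right]
  ring

theorem inner_sgrad_nonpos_of_isLocalMaxOn (hw : Differentiable ℝ w) (hξ : ξ ∈ cap n θ)
    (hmax : IsLocalMaxOn w (cap n θ) ξ) (hX : IsTangent n θ ξ X) (hin : IsInward n ξ X) :
    ⟪sgrad n θ w ξ, X⟫ ≤ 0 := by
  rcases eq_or_ne X 0 with rfl | hX0
  · rw [inner_zero_right]
  obtain ⟨Y, hY1, hY, hYin, hXY⟩ := exists_eq_smul_unit_isInward hX hin hX0
  have hderiv := hasDerivAt_comp_capGeodesic (θ := θ) hw ξ Y 0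
  have hle := (tendsto_capGeodesic_nhdsWithin_cap hξ hY hY1 hYin).eventually hmax
  rw [hXY, real_inner_smul_right, hY.inner_sgrad]
  refine mul_nonpos_of_nonneg_of_nonpos (norm_nonneg X) ?_
  simpa using hasDerivAt_nonpos_of_eventually_nhdsGT_le hderiv (by simpa using hle)

theorem shess_nonpos_of_isLocalMaxOn_of_isInward (hw : ContDiff ℝ 2 w) (hξ : ξ ∈ cap n θ)
    (hmax : IsLocalMaxOn w (cap n θ) ξ) (hcrit : sgrad n θ w ξ = 0) (hX : IsTangent n θ ξ X)
    (hin : IsInward n ξ X) : shess n θ w ξ X X ≤ 0 := by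
  rcases eq_or_ne X 0 with rfl | hX0
  · simp [shess]
  obtain ⟨Y, hY1, hY, hYin, hXY⟩ := exists_eq_smul_unit_isInward hX hin hX0
  have hle := (tendsto_capGeodesic_nhdsWithin_cap hξ hY hY1 hYin).eventually hmax
  have hgradY : ⟪gradient w ξ, Y⟫ = 0 := by rw [← hY.inner_sgrad, hcrit, inner_zero_left]
  rw [hXY, shess_smul]
  exact mul_nonpos_of_nonneg_of_nonpos (sq_nonneg _) <|
    second_hasDerivAt_nonpos_of_eventually_nhdsGT_le
      (hasDerivAt_comp_capGeodesic (hw.differentiable two_ne_zero) ξ Y)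
      (hasDerivAt_inner_gradient_capGeodesic hw ξ hY1) (by simpa using hgradY) (by simpa using hle)

theorem exists_isInward_inner_sgrad_nonneg (hθ : 0 < Real.sin θ) (hξ : ξ ∈ cap n θ)
    (hbdry : ξ ∈ capBdry n θ → ⟪sgrad n θ w ξ, conormal n θ ξ⟫ ≤ 0) :
    ∃ m : Euc n, IsTangent n θ ξ m ∧ IsInward n ξ m ∧ 0 ≤ ⟪sgrad n θ w ξ, m⟫ := by
  rcases hξ.1.lt_or_eq with hpos | hzero
  · exact ⟨0, inner_zero_left _, Or.inl hpos, (inner_zero_right _).ge⟩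
  · have hξb : ξ ∈ capBdry n θ := ⟨hzero.symm, hξ.2⟩
    refine ⟨(-1 : ℝ) • conormal n θ ξ, (isTangent_conormal hθ.ne' hξb).smul _, Or.inr ?_, ?_⟩
    · simpa [conormal_last hξb] using hθ
    · simpa [inner_neg_right] using hbdry hξb

theorem sgrad_eq_zero_of_isLocalMaxOn (hθ : 0 < Real.sin θ) (hw : Differentiable ℝ w)
    (hξ : ξ ∈ cap n θ) (hmax : IsLocalMaxOn w (cap n θ) ξ)
    (hbdry : ξ ∈ capBdry n θ → ⟪sgrad n θ w ξ, conormal n θ ξ⟫ ≤ 0) :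
    sgrad n θ w ξ = 0 := by
  obtain ⟨m, hm, hm_in, hm_nonneg⟩ := exists_isInward_inner_sgrad_nonneg hθ hξ hbdry
  have hm_zero : ⟪sgrad n θ w ξ, m⟫ = 0 :=
    (inner_sgrad_nonpos_of_isLocalMaxOn hw hξ hmax hm hm_in).antisymm hm_nonneg
  -- Adding multiples of `m` bends the gradient inward at no cost to first order.
  obtain ⟨s, hs⟩ := hm_in.exists_add_smul (sgrad n θ w ξ)
  have hle := inner_sgrad_nonpos_of_isLocalMaxOn hw hξ hmax
    ((isTangent_tproj hξ.2 _).add (hm.smul s)) hs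
  rw [inner_add_right, real_inner_smul_right, hm_zero, mul_zero, add_zero] at hle
  exact real_inner_self_nonpos.1 hle

theorem shess_nonpos_of_isLocalMaxOn (hθ : 0 < Real.sin θ) (hw : ContDiff ℝ 2 w)
    (hξ : ξ ∈ cap n θ) (hmax : IsLocalMaxOn w (cap n θ) ξ)
    (hbdry : ξ ∈ capBdry n θ → ⟪sgrad n θ w ξ, conormal n θ ξ⟫ ≤ 0) (hX : IsTangent n θ ξ X) :
    shess n θ w ξ X X ≤ 0 := by
  have hcrit :=
    sgrad_eq_zero_of_isLocalMaxOn hθ (hw.differentiable two_ne_zero) hξ hmax hbdry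
  obtain ⟨m, hm, hm_in, -⟩ := exists_isInward_inner_sgrad_nonneg hθ hξ hbdry
  wlog hX_last : 0 ≤ X (Fin.last n) generalizing X
  · have hneg := this (hX.smul (-1)) (by simpa using le_of_not_ge hX_last)
    rwa [shess_smul, neg_one_sq, one_mul] at hneg
  have hcont : Continuous fun s : ℝ => shess n θ w ξ (X + s • m) (X + s • m) := by
    unfold shess; fun_prop
  have hlim := hcont.tendsto 0
  rw [zero_smul, add_zero] at hlim
  refine le_of_tendsto (hlim.mono_left nhdsWithin_le_nhds : Tendsto _ (𝓝[>] (0 : ℝ)) _) ?_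
  filter_upwards [self_mem_nhdsWithin] with s hs
  exact shess_nonpos_of_isLocalMaxOn_of_isInward hw hξ hmax hcrit (hX.add (hm.smul s))
    (hm_in.add_smul hX_last hs)

end MaximumPrinciple

section Operators

variable {n : ℕ} {θ p q c : ℝ} {f h k : Euc n → ℝ} {ξ : Euc n}

theorem sgrad_sub (hh : DifferentiableAt ℝ h ξ) (hk : DifferentiableAt ℝ k ξ) :
    sgrad n θ (h - k) ξ = sgrad n θ h ξ - sgrad n θ k ξ := by
  rw [sgrad, gradient_sub hh hk, map_sub, sgrad, sgrad]

theorem sgrad_const_smul (n : ℕ) (θ c : ℝ) (h : Euc n → ℝ) (ξ : Euc n) :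
    sgrad n θ (c • h) ξ = c • sgrad n θ h ξ := by
  rw [sgrad, gradient_const_smul, Pi.smul_apply, map_smul, sgrad]

theorem shess_sub (hh : ContDiff ℝ 2 h) (hk : ContDiff ℝ 2 k) (X Y : Euc n) :
    shess n θ (h - k) ξ X Y = shess n θ h ξ X Y - shess n θ k ξ X Y := by
  have hgrad : gradient (h - k) = gradient h - gradient k := funext fun x =>
    gradient_sub (hh.differentiable two_ne_zero x) (hk.differentiable two_ne_zero x)
  have hfderiv := fderiv_sub (differentiable_gradient hh ξ) (differentiable_gradient hk ξ)
  simp only [shess, hgrad, hfderiv, Pi.sub_apply, inner_sub_left, sub_apply]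
  ring

theorem shess_comm (hh : ContDiff ℝ 2 h) (X Y : Euc n) :
    shess n θ h ξ X Y = shess n θ h ξ Y X := by
  rw [shess, shess, inner_fderiv_gradient_comm hh, real_inner_comm X Y]

theorem inner_hessOp (hν : ‖sphNormal n θ ξ‖ = 1) (h : Euc n → ℝ) (x y : Euc n) :
    ⟪hessOp n θ h ξ x, y⟫ =
      shess n θ h ξ (tproj n θ ξ x) (tproj n θ ξ y) +
        h ξ * ⟪tproj n θ ξ x, tproj n θ ξ y⟫ + ⟪sphNormal n θ ξ, x⟫ * ⟪sphNormal n θ ξ, y⟫ := by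
  have hP : ⟪tproj n θ ξ x, tproj n θ ξ y⟫ = ⟪tproj n θ ξ x, y⟫ := by
    rw [← inner_tproj_left, (isTangent_tproj hν x).tproj_eq]
  simp only [hessOp, thessOp, normalPart, shess, hP, add_apply, sub_apply, smul_apply,
    ContinuousLinearMap.comp_apply, ContinuousLinearMap.smulRight_apply, innerSL_apply_apply,
    inner_add_left, inner_sub_left, real_inner_smul_left, inner_tproj_left]

theorem hessOp_sphNormal (hν : ‖sphNormal n θ ξ‖ = 1) (h : Euc n → ℝ) :
    hessOp n θ h ξ (sphNormal n θ ξ) = sphNormal n θ ξ := by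
  simp [hessOp, thessOp, normalPart, tproj_sphNormal hν, hν]

theorem isSymmetric_hessOp (hν : ‖sphNormal n θ ξ‖ = 1) (hh : ContDiff ℝ 2 h) :
    (hessOp n θ h ξ).toLinearMap.IsSymmetric := fun x y => by
  rw [ContinuousLinearMap.coe_coe, real_inner_comm (hessOp n θ h ξ y) x, inner_hessOp hν,
    inner_hessOp hν, shess_comm hh, real_inner_comm (tproj n θ ξ x),
    mul_comm ⟪sphNormal n θ ξ, x⟫]

theorem hessOp_nonneg (hν : ‖sphNormal n θ ξ‖ = 1) (hh : ContDiff ℝ 2 h)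
    (hconv : ∀ X, IsTangent n θ ξ X → 0 ≤ shess n θ h ξ X X + h ξ * ⟪X, X⟫) :
    0 ≤ (hessOp n θ h ξ).toLinearMap := by
  refine (LinearMap.nonneg_iff_isPositive _).2 ⟨isSymmetric_hessOp hν hh, fun x => ?_⟩
  rw [ContinuousLinearMap.coe_coe, inner_hessOp hν]
  exact add_nonneg (hconv _ (isTangent_tproj hν x)) (mul_self_nonneg _)

theorem hessOp_le_hessOp (hν : ‖sphNormal n θ ξ‖ = 1) (hh : ContDiff ℝ 2 h) (hk : ContDiff ℝ 2 k)
    (hle : ∀ X, IsTangent n θ ξ X →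
      shess n θ h ξ X X + h ξ * ⟪X, X⟫ ≤ shess n θ k ξ X X + k ξ * ⟪X, X⟫) :
    (hessOp n θ h ξ).toLinearMap ≤ (hessOp n θ k ξ).toLinearMap := by
  refine (LinearMap.le_def _ _).2
    ⟨(isSymmetric_hessOp hν hk).sub (isSymmetric_hessOp hν hh), fun x => ?_⟩
  rw [LinearMap.sub_apply, inner_sub_left, ContinuousLinearMap.coe_coe,
    ContinuousLinearMap.coe_coe, inner_hessOp hν, inner_hessOp hν, add_sub_add_right_eq_sub]
  exact sub_nonneg.2 (hle _ (isTangent_tproj hν x))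

theorem sdet_le_sdet (hν : ‖sphNormal n θ ξ‖ = 1) (hh : ContDiff ℝ 2 h) (hk : ContDiff ℝ 2 k)
    (hconv : ∀ X, IsTangent n θ ξ X → 0 ≤ shess n θ h ξ X X + h ξ * ⟪X, X⟫)
    (hle : ∀ X, IsTangent n θ ξ X →
      shess n θ h ξ X X + h ξ * ⟪X, X⟫ ≤ shess n θ k ξ X X + k ξ * ⟪X, X⟫) :
    sdet n θ h ξ ≤ sdet n θ k ξ :=
  det_le_det_of_le (hessOp_nonneg hν hh hconv) (hessOp_le_hessOp hν hh hk hle)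

/-- `hessOp` is the identity on the normal line, so scaling `h` rescales it only tangentially; the
transvection along the normal supplies the missing factor. -/
theorem smul_hessOp (hν : ‖sphNormal n θ ξ‖ = 1) (c : ℝ) (h : Euc n → ℝ) :
    c • (hessOp n θ h ξ).toLinearMap =
      (hessOp n θ (c • h) ξ).toLinearMap ∘ₗ
        LinearMap.transvection (innerSL ℝ (sphNormal n θ ξ)).toLinearMap
          ((c - 1) • sphNormal n θ ξ) := by
  ext1 x
  rw [LinearMap.comp_apply, LinearMap.transvection.apply, map_add, map_smul, map_smul]
  simp only [ContinuousLinearMap.coe_coe, hessOp_sphNormal hν]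
  simp only [hessOp, thessOp, normalPart, gradient_const_smul, fderiv_const_smul_field,
    LinearMap.smul_apply, ContinuousLinearMap.coe_coe, add_apply, sub_apply, smul_apply,
    ContinuousLinearMap.comp_apply, ContinuousLinearMap.smulRight_apply, innerSL_apply_apply,
    Pi.smul_apply, map_smul, real_inner_smul_left, smul_eq_mul]
  module

theorem sdet_const_smul (hc : c ≠ 0) (hν : ‖sphNormal n θ ξ‖ = 1) (h : Euc n → ℝ) :
    sdet n θ (c • h) ξ = c ^ n * sdet n θ h ξ := by
  have hdet := congrArg LinearMap.det (smul_hessOp hν c h)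
  have hval : 1 + ⟪sphNormal n θ ξ, (c - 1) • sphNormal n θ ξ⟫ = c := by
    rw [real_inner_smul_right, real_inner_self_eq_norm_sq, hν]
    ring
  rw [LinearMap.det_smul, LinearMap.det_comp, LinearMap.transvection.det, finrank_euclideanSpace,
    Fintype.card_fin, ContinuousLinearMap.coe_coe, innerSL_apply_apply, hval, pow_succ] at hdet
  refine mul_right_cancel₀ hc ?_
  rw [sdet, ← hdet, sdet]
  ring

theorem eqRHS_const_smul (f : Euc n → ℝ) (hc : 0 < c) (hpos : 0 < h ξ) :
    eqRHS n θ p q f (c • h) ξ = c ^ (n + p - q) * eqRHS n θ p q f h ξ := by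
  have hbase : (c * h ξ) ^ 2 + (c * ‖sgrad n θ h ξ‖) ^ 2 =
      c ^ (2 : ℝ) * (h ξ ^ 2 + ‖sgrad n θ h ξ‖ ^ 2) := by
    rw [Real.rpow_two]
    ring
  have hexp : c ^ (n + p - q) = c ^ (p - 1) * c ^ ((n : ℝ) + 1 - q) := by
    rw [← Real.rpow_add hc]
    ring_nf
  rw [eqRHS, eqRHS, sgrad_const_smul, norm_smul, Real.norm_of_nonneg hc.le, Pi.smul_apply,
    smul_eq_mul, hbase, Real.mul_rpow hc.le hpos.le, Real.mul_rpow (by positivity) (by positivity),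
    ← Real.rpow_mul hc.le, mul_div_cancel₀ _ two_ne_zero, hexp]
  ring

theorem eqRHS_pos (hf : 0 < f ξ) (hpos : 0 < h ξ) : 0 < eqRHS n θ p q f h ξ := by
  unfold eqRHS
  positivity

end Operators

section Comparison

theorem exists_touching_mul {α : Type*} [TopologicalSpace α] {K : Set α} (hK : IsCompact K)
    (hne : K.Nonempty) {u v : α → ℝ} (hu : ContinuousOn u K) (hv : ContinuousOn v K)
    (hu_pos : ∀ x ∈ K, 0 < u x) (hv_pos : ∀ x ∈ K, 0 < v x) :
    ∃ x₀ ∈ K, ∃ c : ℝ, 0 < c ∧ u x₀ = c * v x₀ ∧ ∀ x ∈ K, u x ≤ c * v x := by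
  obtain ⟨x₀, hx₀, hmax⟩ := hK.exists_isMaxOn hne (hu.div hv fun x hx => (hv_pos x hx).ne')
  exact ⟨x₀, hx₀, u x₀ / v x₀, div_pos (hu_pos x₀ hx₀) (hv_pos x₀ hx₀),
    (div_mul_cancel₀ _ (hv_pos x₀ hx₀).ne').symm,
    fun x hx => (div_le_iff₀ (hv_pos x hx)).1 (hmax hx)⟩

variable {n : ℕ} {θ p q : ℝ} {f h₁ h₂ : Euc n → ℝ} {ξ : Euc n}

theorem sgrad_eq_and_sdet_le_of_isLocalMaxOn_sub (hθ : 0 < Real.sin θ) (hh₁ : ContDiff ℝ 2 h₁)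
    (hh₂ : ContDiff ℝ 2 h₂) (hξ : ξ ∈ cap n θ) (hmax : IsLocalMaxOn (h₁ - h₂) (cap n θ) ξ)
    (heq : h₁ ξ = h₂ ξ)
    (hbdry : ξ ∈ capBdry n θ →
      ⟪sgrad n θ h₁ ξ, conormal n θ ξ⟫ ≤ ⟪sgrad n θ h₂ ξ, conormal n θ ξ⟫)
    (hconv : ∀ X, IsTangent n θ ξ X → 0 ≤ shess n θ h₁ ξ X X + h₁ ξ * ⟪X, X⟫) :
    sgrad n θ h₁ ξ = sgrad n θ h₂ ξ ∧ sdet n θ h₁ ξ ≤ sdet n θ h₂ ξ := by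
  have hsgrad : sgrad n θ (h₁ - h₂) ξ = sgrad n θ h₁ ξ - sgrad n θ h₂ ξ :=
    sgrad_sub (hh₁.differentiable two_ne_zero ξ) (hh₂.differentiable two_ne_zero ξ)
  have hbdry_sub : ξ ∈ capBdry n θ → ⟪sgrad n θ (h₁ - h₂) ξ, conormal n θ ξ⟫ ≤ 0 := fun hξb => by
    rw [hsgrad, inner_sub_left]
    exact sub_nonpos.2 (hbdry hξb)
  have hsub : ContDiff ℝ 2 (h₁ - h₂) := hh₁.sub hh₂
  constructor
  · have hcrit :=
      sgrad_eq_zero_of_isLocalMaxOn hθ (hsub.differentiable two_ne_zero) hξ hmax hbdry_sub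
    exact sub_eq_zero.1 (hsgrad ▸ hcrit)
  · refine sdet_le_sdet hξ.2 hh₁ hh₂ hconv fun X hX => ?_
    have hhess := shess_nonpos_of_isLocalMaxOn hθ hsub hξ hmax hbdry_sub hX
    rw [shess_sub hh₁ hh₂] at hhess
    rw [heq]
    linarith

theorem le_one_of_touching (hθ : 0 < Real.sin θ) (hpq : q < p) (hf : 0 < f ξ)
    (hh₁ : ContDiff ℝ 2 h₁) (hh₂ : ContDiff ℝ 2 h₂) (hξ : ξ ∈ cap n θ) (hpos : 0 < h₂ ξ)
    {c : ℝ} (hc : 0 < c) (htouch : h₁ ξ = c * h₂ ξ) (hle : ∀ x ∈ cap n θ, h₁ x ≤ c * h₂ x)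
    (hbdry : ξ ∈ capBdry n θ →
      ⟪sgrad n θ h₁ ξ, conormal n θ ξ⟫ ≤ c * ⟪sgrad n θ h₂ ξ, conormal n θ ξ⟫)
    (hconv : ∀ X, IsTangent n θ ξ X → 0 ≤ shess n θ h₁ ξ X X + h₁ ξ * ⟪X, X⟫)
    (hsub : eqRHS n θ p q f h₁ ξ ≤ sdet n θ h₁ ξ) (hsuper : sdet n θ h₂ ξ ≤ eqRHS n θ p q f h₂ ξ) :
    c ≤ 1 := by
  have hmax : IsLocalMaxOn (h₁ - c • h₂) (cap n θ) ξ := by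
    refine IsMaxOn.localize fun x hx => ?_
    simpa [htouch] using hle x hx
  have hbdry_smul (hξb : ξ ∈ capBdry n θ) :
      ⟪sgrad n θ h₁ ξ, conormal n θ ξ⟫ ≤ ⟪sgrad n θ (c • h₂) ξ, conormal n θ ξ⟫ := by
    rw [sgrad_const_smul, real_inner_smul_left]
    exact hbdry hξb
  have hsmul : ContDiff ℝ 2 (c • h₂) := hh₂.const_smul c
  obtain ⟨hsgrad, hsdet⟩ := sgrad_eq_and_sdet_le_of_isLocalMaxOn_sub hθ hh₁ hsmul hξ hmax htouch
    hbdry_smul hconv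
  have hscale : c ^ (n + p - q) * eqRHS n θ p q f h₂ ξ ≤ c ^ (n : ℝ) * eqRHS n θ p q f h₂ ξ :=
    calc c ^ (n + p - q) * eqRHS n θ p q f h₂ ξ
        = eqRHS n θ p q f (c • h₂) ξ := (eqRHS_const_smul f hc hpos).symm
      _ = eqRHS n θ p q f h₁ ξ := by
        rw [eqRHS, eqRHS, ← hsgrad, htouch, Pi.smul_apply, smul_eq_mul]
      _ ≤ sdet n θ (c • h₂) ξ := hsub.trans hsdet
      _ = c ^ (n : ℝ) * sdet n θ h₂ ξ := by rw [sdet_const_smul hc.ne' hξ.2, Real.rpow_natCast]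
      _ ≤ c ^ (n : ℝ) * eqRHS n θ p q f h₂ ξ := by gcongr
  by_contra! hc_gt
  exact (le_of_mul_le_mul_right hscale (eqRHS_pos hf hpos)).not_gt
    (Real.rpow_lt_rpow_of_exponent_lt hc_gt (by linarith))

theorem IsConvexSol.shess_add_nonneg (hconv : IsConvexSol n θ h₁) (hξ : ξ ∈ cap n θ) (X : Euc n)
    (hX : IsTangent n θ ξ X) : 0 ≤ shess n θ h₁ ξ X X + h₁ ξ * ⟪X, X⟫ := by
  rcases eq_or_ne X 0 with rfl | hX0
  · simp [shess]
  · exact (hconv ξ hξ X hX hX0).le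

theorem le_on_cap_of_subsolution_of_supersolution (hθ : 0 < Real.sin θ) (hpq : q < p)
    (hf : PosOnCap n θ f) (hh₁ : ContDiff ℝ 2 h₁) (hh₂ : ContDiff ℝ 2 h₂)
    (hp₁ : PosOnCap n θ h₁) (hp₂ : PosOnCap n θ h₂) (hc₁ : IsConvexSol n θ h₁)
    (hsub : ∀ ξ ∈ cap n θ, eqRHS n θ p q f h₁ ξ ≤ sdet n θ h₁ ξ)
    (hsuper : ∀ ξ ∈ cap n θ, sdet n θ h₂ ξ ≤ eqRHS n θ p q f h₂ ξ)
    (hbdry : ∀ ξ ∈ capBdry n θ,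
      h₂ ξ * ⟪sgrad n θ h₁ ξ, conormal n θ ξ⟫ ≤ h₁ ξ * ⟪sgrad n θ h₂ ξ, conormal n θ ξ⟫)
    (hξ : ξ ∈ cap n θ) : h₁ ξ ≤ h₂ ξ := by
  obtain ⟨x, hx, c, hc, htouch, hle⟩ := exists_touching_mul (isCompact_cap n θ) ⟨ξ, hξ⟩
    hh₁.continuous.continuousOn hh₂.continuous.continuousOn hp₁ hp₂
  have hbdry_x (hxb : x ∈ capBdry n θ) :
      ⟪sgrad n θ h₁ x, conormal n θ x⟫ ≤ c * ⟪sgrad n θ h₂ x, conormal n θ x⟫ := by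
    have hmul := hbdry x hxb
    rw [htouch, mul_right_comm, mul_comm] at hmul
    exact le_of_mul_le_mul_right hmul (hp₂ x hx)
  have hc_le := le_one_of_touching hθ hpq (hf x hx) hh₁ hh₂ hx (hp₂ x hx) hc htouch hle hbdry_x
    (hc₁.shess_add_nonneg hx) (hsub x hx) (hsuper x hx)
  exact (hle ξ hξ).trans (mul_le_of_le_one_left (hp₂ ξ hξ).le hc_le)

end Comparison

theorem uniqueness_of_solutions_general {n : ℕ} {θ p q : ℝ} (hθ : θ ∈ Set.Ioo 0 π) (hpq : q < p)
    {f : Euc n → ℝ} (hf : PosOnCap n θ f) (β : Euc n → ℝ) {h₁ h₂ : Euc n → ℝ}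
    (hh₁ : ContDiff ℝ 2 h₁) (hh₂ : ContDiff ℝ 2 h₂) (hp₁ : PosOnCap n θ h₁)
    (hp₂ : PosOnCap n θ h₂) (hc₁ : IsConvexSol n θ h₁) (hc₂ : IsConvexSol n θ h₂)
    (he₁ : SolvesEq n θ p q f h₁) (he₂ : SolvesEq n θ p q f h₂)
    (hr₁ : ∀ ξ ∈ capBdry n θ, ⟪sgrad n θ h₁ ξ, conormal n θ ξ⟫ = β ξ * h₁ ξ)
    (hr₂ : ∀ ξ ∈ capBdry n θ, ⟪sgrad n θ h₂ ξ, conormal n θ ξ⟫ = β ξ * h₂ ξ) :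
    Set.EqOn h₁ h₂ (cap n θ) := by
  have hsin : 0 < Real.sin θ := Real.sin_pos_of_mem_Ioo hθ
  have hbdry (ξ) (hξ : ξ ∈ capBdry n θ) : h₂ ξ * ⟪sgrad n θ h₁ ξ, conormal n θ ξ⟫ =
      h₁ ξ * ⟪sgrad n θ h₂ ξ, conormal n θ ξ⟫ := by
    rw [hr₁ ξ hξ, hr₂ ξ hξ]
    ring
  exact fun ξ hξ => le_antisymm
    (le_on_cap_of_subsolution_of_supersolution hsin hpq hf hh₁ hh₂ hp₁ hp₂ hc₁
      (fun x hx => (he₁ x hx).ge) (fun x hx => (he₂ x hx).le) (fun x hx => (hbdry x hx).le) hξ)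
    (le_on_cap_of_subsolution_of_supersolution hsin hpq hf hh₂ hh₁ hp₂ hp₁ hc₂
      (fun x hx => (he₂ x hx).ge) (fun x hx => (he₁ x hx).le) (fun x hx => (hbdry x hx).ge) hξ)

/-- Lemma 5.1, uniqueness: for `p > q` and `θ ∈ (0, π/2)`, two positive
convex `C²` solutions of `det(∇²h + hσ) = f·h^{p-1}(h² + |∇h|²)^{(n+1-q)/2}` in `C_θ` with
`∇_μ h = cot θ · h` on `∂C_θ` coincide on `C_θ`. -/
theorem uniqueness_of_solutions
    (n : ℕ) (hn : 1 ≤ n) (θ p q : ℝ) (hθ : θ ∈ Set.Ioo 0 (π / 2)) (hpq : q < p)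
    (f : Euc n → ℝ) (hf : ContDiff ℝ (⊤ : ℕ∞) f) (hfpos : ∀ ξ ∈ cap n θ, 0 < f ξ)
    (h₁ h₂ : Euc n → ℝ) (hh₁ : ContDiff ℝ 2 h₁) (hh₂ : ContDiff ℝ 2 h₂)
    (hp₁ : PosOnCap n θ h₁) (hp₂ : PosOnCap n θ h₂)
    (hc₁ : IsConvexSol n θ h₁) (hc₂ : IsConvexSol n θ h₂)
    (he₁ : SolvesEq n θ p q f h₁) (he₂ : SolvesEq n θ p q f h₂)
    (hr₁ : RobinBC n θ h₁) (hr₂ : RobinBC n θ h₂) :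
    Set.EqOn h₁ h₂ (cap n θ) := by
  exact uniqueness_of_solutions_general ⟨hθ.1, hθ.2.trans (half_lt_self Real.pi_pos)⟩ hpq hfpos
    (fun _ => Real.cot θ) hh₁ hh₂ hp₁ hp₂ hc₁ hc₂ he₁ he₂ hr₁ hr₂
end
end
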